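/- arXiv:2307.12958 — 3 statements merged into one kernel-verified Lean document; each statement's English description precedes it below -/
import Mathlib

section
/- Let X be a real Banach space with a spreading Schauder basis. If X contains an isomorphic copy of ℓ₁, then X contains a complemented isomorphic copy of ℓ₁. -/
open Metric Set Filter Topology

/-!
Write `L x a = ∑ a i • x i` for finitely supported `a`. The argument uses only that `x` is
spreading and that the vectors `L x a` are dense.

*Uniformity.* The strictly increasing maps `ℕ → ℕ` form a Polish space, so Baire's theorem turns
the pointwise spreading constants into a single `C` (`exists_uniform_spreading_const`).

*Killing zero-sum blocks.* If some consecutive blocks of `a` have coefficients summing to `0`, then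
deleting them multiplies the norm by at most `C ^ 2`. Indeed, spread the blocks apart and average
over `M` translates of the blocks to be deleted: the zero sum makes their contribution telescope,
so that it is `O(1 / M)` (`norm_linearCombination_indicator_le`).

*Zero-sum blocks close to `ℓ₁`.* The zero-sum vectors supported beyond `N` span a subspace whose
closure has finite codimension, so some difference of two images of far-out unit vectors of `ℓ₁`
is as close to it as desired. This gives successive zero-sum blocks `w n = L x (W n)` whose convex
combinations are bounded away from `0` (`exists_zeroSum_blocks`).

*Doubling.* Let `I n` be successive intervals carrying the `W n`. Spread the basis so that each
`I n` has two adjacent copies `p (I n) < q (I n)`, and set `d i = x (p i) - x (q i)`. For every `a`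
the vector `L d a` has zero sum on each double block, so restricting it to any set of blocks is
bounded by a multiple of `‖L x a‖`. On the other hand, the `q`-copies of the blocks `W n`
can be killed since these have zero sum, so the `L d (W n)` still have convex combinations bounded
away from `0` (`exists_doubling`).

*Projection.* By Hahn-Banach some functional `g` satisfies `g (L d (W n)) ≥ r > 0` for all `n`. The
functionals `f n (a) = g (L d (a restricted to I n))` satisfy `∑ |f n (a)| ≤ K' ‖L x a‖`, hence
define a bounded map `G : X → ℓ₁`. It sends `w n` to a multiple, at least `r`, of the `n`-th unit
vector, so it has the bounded right inverse `F` sending the `n`-th unit vector to a multiple of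
`w n`, and `F ∘ G` is a projection onto a copy of `ℓ₁` (`exists_complemented_l1_of_blocks`).
-/

section
variable {X : Type*} [NormedAddCommGroup X] [NormedSpace ℝ X]

local notation "L" => Finsupp.linearCombination ℝ
local notation "ℓ₁" => lp (fun _ : ℕ => ℝ) 1

/-! ### Uniform spreading and deletion of zero-sum blocks -/

/-- The constants in the definition of a spreading sequence can be chosen independently of the
subsequence, by Baire's theorem on the space of strictly increasing maps `ℕ → ℕ`. -/
theorem exists_uniform_spreading_const (x : ℕ → X)
    (hspread : ∀ φ : ℕ → ℕ, StrictMono φ → ∃ A B : ℝ, 0 < A ∧ 0 < B ∧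
      ∀ (s : Finset ℕ) (a : ℕ → ℝ),
        A * ‖∑ n ∈ s, a n • x n‖ ≤ ‖∑ n ∈ s, a n • x (φ n)‖ ∧
        ‖∑ n ∈ s, a n • x (φ n)‖ ≤ B * ‖∑ n ∈ s, a n • x n‖) :
    ∃ C : ℝ, 0 < C ∧ ∀ φ : ℕ → ℕ, StrictMono φ → ∀ a : ℕ →₀ ℝ,
      ‖L x a‖ ≤ C * ‖L (x ∘ φ) a‖ ∧ ‖L (x ∘ φ) a‖ ≤ C * ‖L x a‖ := by
  have hsingle : ∀ φ : ℕ → ℕ, StrictMono φ → ∃ C : ℝ, 0 < C ∧ ∀ a : ℕ →₀ ℝ,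
      ‖L x a‖ ≤ C * ‖L (x ∘ φ) a‖ ∧ ‖L (x ∘ φ) a‖ ≤ C * ‖L x a‖ := by
    intro φ hφ
    obtain ⟨A, B, hA, hB, h⟩ := hspread φ hφ
    refine ⟨max A⁻¹ B, lt_max_of_lt_right hB, fun a => ?_⟩
    obtain ⟨h1, h2⟩ := h a.support a
    have e1 : L x a = ∑ n ∈ a.support, a n • x n := rfl
    have e2 : L (x ∘ φ) a = ∑ n ∈ a.support, a n • x (φ n) := rfl
    rw [← e1, ← e2] at h1 h2
    constructor
    · calc ‖L x a‖ ≤ A⁻¹ * ‖L (x ∘ φ) a‖ := by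
            rw [inv_mul_eq_div, le_div_iff₀ hA]; linarith
        _ ≤ _ := by gcongr; exact le_max_left _ _
    · exact h2.trans (by gcongr; exact le_max_right _ _)
  let Y := {φ : ℕ → ℕ // StrictMono φ}
  have hclosedY : IsClosed {φ : ℕ → ℕ | StrictMono φ} := by
    have : {φ : ℕ → ℕ | StrictMono φ} = ⋂ n, {φ : ℕ → ℕ | φ n < φ (n + 1)} := by
      ext φ
      simp only [mem_ofPred_eq, mem_iInter]
      exact ⟨fun h n => h n.lt_succ_self, strictMono_nat_of_lt_succ⟩
    rw [this]
    refine isClosed_iInter fun n => ?_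
    have hc : Continuous fun φ : ℕ → ℕ => (φ n, φ (n + 1)) := by fun_prop
    exact (isClosed_discrete {p : ℕ × ℕ | p.1 < p.2}).preimage hc
  have : PolishSpace Y := hclosedY.polishSpace
  have hcont : ∀ a : ℕ →₀ ℝ, Continuous fun φ : Y => L (x ∘ φ.1) a := by
    intro a
    have : (fun φ : Y => L (x ∘ φ.1) a) = fun φ : Y => ∑ n ∈ a.support, a n • x (φ.1 n) := rfl
    rw [this]
    refine continuous_finsetSum _ fun n _ => Continuous.const_smul ?_ _
    have h1 : Continuous fun φ : Y => φ.1 n := (continuous_apply n).comp continuous_subtype_val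
    exact (continuous_of_discreteTopology (f := x)).comp h1
  let F : ℕ → Set Y := fun m => {φ | ∀ a : ℕ →₀ ℝ,
      ‖L x a‖ ≤ m * ‖L (x ∘ φ.1) a‖ ∧ ‖L (x ∘ φ.1) a‖ ≤ m * ‖L x a‖}
  have hFclosed : ∀ m, IsClosed (F m) := by
    intro m
    have : F m = ⋂ a : ℕ →₀ ℝ, ({φ : Y | ‖L x a‖ ≤ m * ‖L (x ∘ φ.1) a‖} ∩
        {φ : Y | ‖L (x ∘ φ.1) a‖ ≤ m * ‖L x a‖}) := by
      ext φ; simp [F]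
    rw [this]
    exact isClosed_iInter fun a =>
      (isClosed_le continuous_const (continuous_const.mul (hcont a).norm)).inter
        (isClosed_le (hcont a).norm continuous_const)
  have hFunion : ⋃ m, F m = univ := by
    refine eq_univ_of_forall fun φ => ?_
    obtain ⟨C, hC, h⟩ := hsingle φ.1 φ.2
    obtain ⟨m, hm⟩ := exists_nat_ge C
    refine mem_iUnion.2 ⟨m, fun a => ⟨(h a).1.trans ?_, (h a).2.trans ?_⟩⟩ <;> gcongr
  have : Nonempty Y := ⟨⟨id, strictMono_id⟩⟩
  obtain ⟨m, φ₀, hφ₀⟩ := nonempty_interior_of_iUnion_of_closed hFclosed hFunion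
  -- a set with interior contains all maps with a given initial segment
  have hN : ∃ N, ∀ φ : Y, (∀ i < N, φ.1 i = φ₀.1 i) → φ ∈ F m := by
    by_contra! hcon
    choose ψ hψ hψF using hcon
    have hlim : Tendsto ψ atTop (𝓝 φ₀) := by
      rw [tendsto_subtype_rng, tendsto_pi_nhds]
      intro i
      refine tendsto_const_nhds.congr' ?_
      filter_upwards [eventually_gt_atTop i] with N hi using (hψ N i hi).symm
    obtain ⟨N, hN⟩ := (hlim.eventually (mem_interior_iff_mem_nhds.1 hφ₀)).exists
    exact hψF N hN
  obtain ⟨N, hN⟩ := hN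
  obtain ⟨C₁, hC₁, h₁⟩ := hsingle (fun i => i + N) fun i j h => by simpa using h
  obtain ⟨C₂, hC₂, h₂⟩ := hsingle (fun i => i + φ₀.1 N) fun i j h => by simpa using h
  refine ⟨C₂ * (m * C₁) + C₁ * (m * C₂) + 1, by positivity, fun φ hφ a => ?_⟩
  -- up to shifts of source and target, an arbitrary `φ` extends the initial segment of `φ₀`
  let ψ : ℕ → ℕ := fun k => if k < N then φ₀.1 k else φ (k - N) + φ₀.1 N
  have hψ : StrictMono ψ := by
    intro i j hij
    simp only [ψ]
    split_ifs with h1 h2 h2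
    · exact φ₀.2 hij
    · exact (φ₀.2 h1).trans_le (Nat.le_add_left _ _)
    · omega
    · have := hφ (show i - N < j - N by omega)
      omega
  obtain ⟨h3, h4⟩ := hN ⟨ψ, hψ⟩ (fun i hi => by simp [ψ, hi]) (a.mapDomain fun i => i + N)
  obtain ⟨h5, h6⟩ := h₁ a
  obtain ⟨h7, h8⟩ := h₂ (a.mapDomain φ)
  simp only [Finsupp.linearCombination_mapDomain] at h3 h4 h7 h8
  have e : (x ∘ ψ) ∘ (fun i => i + N) = (x ∘ fun i => i + φ₀.1 N) ∘ φ := by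
    funext i; simp [ψ]
  rw [e] at h3 h4
  have p1 : (0 : ℝ) ≤ C₂ * (m * C₁) := by positivity
  have p2 : (0 : ℝ) ≤ C₁ * (m * C₂) := by positivity
  constructor
  · calc _ ≤ C₁ * (m * (C₂ * ‖L (x ∘ φ) a‖)) := by
          refine h5.trans ?_; gcongr; refine h3.trans ?_; gcongr
      _ = (C₁ * (m * C₂)) * ‖L (x ∘ φ) a‖ := by ring
      _ ≤ _ := by gcongr; linarith
  · calc _ ≤ C₂ * (m * (C₁ * ‖L x a‖)) := by
          refine h7.trans ?_; gcongr; refine h4.trans ?_; gcongr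
      _ = (C₂ * (m * C₁)) * ‖L x a‖ := by ring
      _ ≤ _ := by gcongr; linarith

/-- In a uniformly spreading sequence, restricting to the blocks `β ⁻¹' {n}`, `n ∈ E`, costs at most
the factor `C * C`, provided that the coefficients of each deleted block sum to zero. -/
theorem norm_linearCombination_indicator_le (x : ℕ → X) {C : ℝ} (hC : 0 < C)
    (hx : ∀ φ : ℕ → ℕ, StrictMono φ → ∀ a : ℕ →₀ ℝ,
      ‖L x a‖ ≤ C * ‖L (x ∘ φ) a‖ ∧ ‖L (x ∘ φ) a‖ ≤ C * ‖L x a‖)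
    {β : ℕ → ℕ} (hβ : Monotone β) (E : Set ℕ) (a : ℕ →₀ ℝ)
    (ha : ∀ n ∉ E, L ((β ⁻¹' {n}).indicator (1 : ℕ → ℝ)) a = 0) :
    ‖L (fun i => (β ⁻¹' E).indicator x i) a‖ ≤ C * C * ‖L x a‖ := by
  classical
  have ha' : ∀ n ∉ E, ∑ i ∈ a.support with β i = n, a i = 0 := by
    intro n hn
    rw [← ha n hn, Finsupp.linearCombination_apply, Finsupp.sum, Finset.sum_filter]
    refine Finset.sum_congr rfl fun i _ => ?_
    by_cases hi : β i = n <;> simp [hi]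
  obtain ⟨B, hB⟩ : ∃ B, ∀ n, ‖x n‖ ≤ B := by
    refine ⟨C * ‖x 0‖, fun n => ?_⟩
    have := (hx (fun i => i + n) (fun i j h => by simpa using h) (Finsupp.single 0 1)).2
    simpa using this
  have hB0 : 0 ≤ B := (norm_nonneg _).trans (hB 0)
  set D : ℝ := ∑ i ∈ a.support, |a i| * (2 * i * B) with hD
  have hD0 : 0 ≤ D := Finset.sum_nonneg fun i _ => by positivity
  have key : ∀ M : ℕ, M * (‖L (fun i => (β ⁻¹' E).indicator x i) a‖) ≤
      C * (M * (C * ‖L x a‖) + D) := by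
    intro M
    -- the blocks are moved apart by gaps `M`; the blocks outside `E` are moved further by `j ≤ M`
    let φ : ℕ → ℕ → ℕ := fun j i => i + M * β i + if β i ∈ E then 0 else j
    have hφ : ∀ j ≤ M, StrictMono (φ j) := by
      intro j hj i k hik
      have hle := hβ hik.le
      simp only [φ]
      rcases hle.eq_or_lt with h | h
      · rw [h]; omega
      · have h1 : M * (β i + 1) ≤ M * β k := Nat.mul_le_mul_left _ h
        have h2 : M * (β i + 1) = M * β i + M := by ring
        split_ifs <;> omega
    let y : ℕ → X := fun i => (β ⁻¹' E).indicator (x ∘ φ 0) i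
    let ρ : ℕ → X := fun n => ∑ j ∈ Finset.range M, x (M * n + j)
    let r : ℕ → X := fun i => if β i ∈ E then 0 else
      (∑ j ∈ Finset.range M, x (i + M * β i + j)) - ρ (β i)
    -- subtracting `ρ` from the summands of a zero-sum block changes nothing, while `r i` is bounded
    -- independently of `M` by telescoping
    have hρ : ∑ i ∈ a.support, a i • (if β i ∈ E then 0 else ρ (β i)) = 0 := by
      rw [← Finset.sum_fiberwise_of_maps_to (s := a.support) (t := a.support.image β) (g := β)
        (fun i hi => Finset.mem_image_of_mem _ hi)]
      refine Finset.sum_eq_zero fun n _ => ?_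
      by_cases hn : n ∈ E
      · refine Finset.sum_eq_zero fun i hi => ?_
        simp [(Finset.mem_filter.1 hi).2, hn]
      · have : ∀ i ∈ a.support.filter (fun i => β i = n),
            a i • (if β i ∈ E then 0 else ρ (β i)) = a i • ρ n := by
          intro i hi
          simp [(Finset.mem_filter.1 hi).2, hn]
        rw [Finset.sum_congr rfl this, ← Finset.sum_smul, ha' n hn, zero_smul]
    have hdecomp : ∑ j ∈ Finset.range M, L (x ∘ φ j) a = (M : ℝ) • L y a + L r a := by
      have h1 : ∀ i, ∑ j ∈ Finset.range M, a i • x (φ j i) =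
          (M : ℝ) • (a i • y i) + a i • r i + a i • (if β i ∈ E then 0 else ρ (β i)) := by
        intro i
        rw [← Finset.smul_sum, smul_comm, ← smul_add, ← smul_add]
        congr 1
        by_cases h : β i ∈ E
        · simp [φ, y, r, h, Nat.cast_smul_eq_nsmul]
        · simp [φ, y, r, h]
      simp only [Finsupp.linearCombination_apply, Finsupp.sum, Function.comp_apply]
      rw [Finset.sum_comm, Finset.sum_congr rfl fun i _ => h1 i, Finset.sum_add_distrib, hρ,
        add_zero, Finset.sum_add_distrib, Finset.smul_sum]
    have hr : ‖L r a‖ ≤ D := by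
      simp only [Finsupp.linearCombination_apply, Finsupp.sum]
      refine (norm_sum_le _ _).trans (Finset.sum_le_sum fun i _ => ?_)
      rw [norm_smul, Real.norm_eq_abs]
      gcongr
      by_cases h : β i ∈ E
      · simp only [r, h, if_true, norm_zero]; positivity
      · simp only [r, h, if_false, ρ]
        set c := M * β i
        have e1 : ∑ j ∈ Finset.range M, x (i + c + j) + ∑ j ∈ Finset.range i, x (c + j) =
            ∑ j ∈ Finset.range M, x (c + j) + ∑ j ∈ Finset.range i, x (c + M + j) := by
          have h1 := Finset.sum_range_add (fun j => x (c + j)) i M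
          have h2 := Finset.sum_range_add (fun j => x (c + j)) M i
          simp only [← add_assoc] at h1 h2
          rw [← h2, add_comm M i, h1, add_comm, add_comm i c]
        have e2 : ∑ j ∈ Finset.range M, x (i + c + j) - ∑ j ∈ Finset.range M, x (c + j) =
            ∑ j ∈ Finset.range i, x (c + M + j) - ∑ j ∈ Finset.range i, x (c + j) := by
          rw [sub_eq_sub_iff_add_eq_add, e1, add_comm]
        rw [e2]
        have e3 : ∀ d : ℕ, ‖∑ j ∈ Finset.range i, x (d + j)‖ ≤ i * B := fun d => by
          simpa using norm_sum_le_of_le (Finset.range i) fun j _ => hB (d + j)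
        calc _ ≤ i * B + i * B := (norm_sub_le _ _).trans (add_le_add (e3 _) (e3 _))
          _ = _ := by ring
    have hgap : ‖L (fun i => (β ⁻¹' E).indicator x i) a‖ ≤ C * ‖L y a‖ := by
      have h := (hx (φ 0) (hφ 0 (Nat.zero_le _)) (a.filter fun i => β i ∈ E)).1
      have e : ∀ z : ℕ → X, L z (a.filter fun i => β i ∈ E) =
          L (fun i => (β ⁻¹' E).indicator z i) a := by
        intro z
        simp only [Finsupp.linearCombination_apply, Finsupp.sum, Finsupp.support_filter]
        rw [Finset.sum_filter]
        refine Finset.sum_congr rfl fun i _ => ?_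
        by_cases hi : β i ∈ E <;> simp [hi]
      rwa [e, e] at h
    have hy : M * ‖L y a‖ ≤ M * (C * ‖L x a‖) + D := by
      have h1 : (M : ℝ) • L y a = ∑ j ∈ Finset.range M, L (x ∘ φ j) a - L r a := by
        rw [hdecomp, add_sub_cancel_right]
      have h2 : ‖∑ j ∈ Finset.range M, L (x ∘ φ j) a‖ ≤ M * (C * ‖L x a‖) := by
        simpa using norm_sum_le_of_le (Finset.range M) fun j hj =>
          (hx (φ j) (hφ j (Finset.mem_range.1 hj).le) a).2
      calc M * ‖L y a‖ = ‖(M : ℝ) • L y a‖ := by rw [norm_smul]; simp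
        _ ≤ _ := by rw [h1]; exact (norm_sub_le _ _).trans (add_le_add h2 hr)
    calc _ ≤ M * (C * ‖L y a‖) := by gcongr
      _ = C * (M * ‖L y a‖) := by ring
      _ ≤ _ := by gcongr
  by_contra! hcon
  obtain ⟨M, hM⟩ := exists_nat_gt (C * D /
    (‖L (fun i => (β ⁻¹' E).indicator x i) a‖ - C * C * ‖L x a‖))
  rw [div_lt_iff₀ (sub_pos.2 hcon)] at hM
  have := key M
  nlinarith

/-! ### Zero-sum blocks spanning `ℓ₁` -/

/-- Modulo the closure of the zero-sum vectors supported in `[N, ∞)`, the space is finite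
dimensional; hence a bounded sequence has two far-out terms whose difference is close to such
a vector. -/
theorem exists_zeroSum_approx (x : ℕ → X) (hd : DenseRange (L x)) (u : ℕ → X) {R : ℝ}
    (hu : ∀ n, ‖u n‖ ≤ R) (N : ℕ) {ε : ℝ} (hε : 0 < ε) :
    ∃ (W : ℕ →₀ ℝ) (j k : ℕ), (∀ i < N, W i = 0) ∧ L (fun _ => (1 : ℝ)) W = 0 ∧
      N ≤ j ∧ j < k ∧ ‖u j - u k - L x W‖ < ε := by
  let S : Submodule ℝ (ℕ →₀ ℝ) := Finsupp.supported ℝ ℝ (Ici N) ⊓ LinearMap.ker (L fun _ => (1 : ℝ))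
  let Z : Submodule ℝ X := (S.map (L x)).topologicalClosure
  have hZ : IsClosed (Z : Set X) := Submodule.isClosed_topologicalClosure _
  let V : Submodule ℝ (X ⧸ Z) := Submodule.span ℝ ((fun i => Z.mkQ (x i)) '' Iic N)
  have hVfin : FiniteDimensional ℝ V := FiniteDimensional.span_of_finite ℝ ((finite_Iic N).image _)
  have hcont : Continuous Z.mkQ := Z.mkQL.continuous
  have hmem : ∀ i, Z.mkQ (x i) ∈ V := by
    intro i
    rcases le_total i N with h | h
    · exact Submodule.subset_span ⟨i, h, rfl⟩
    · -- beyond `N`, all `x i` agree with `x N` modulo `Z`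
      have : Z.mkQ (x i) = Z.mkQ (x N) := by
        rw [← sub_eq_zero, ← map_sub, ← LinearMap.mem_ker, Submodule.ker_mkQ]
        refine Submodule.le_topologicalClosure _
          ⟨Finsupp.single i 1 - Finsupp.single N 1, ⟨?_, ?_⟩, by simp⟩
        · exact Submodule.sub_mem _ (Finsupp.single_mem_supported ℝ 1 h)
            (Finsupp.single_mem_supported ℝ 1 (le_refl N))
        · simp
      rw [this]
      exact Submodule.subset_span ⟨N, le_refl N, rfl⟩
  have hVtop : V = ⊤ := by
    have hcl : IsClosed (Z.mkQ ⁻¹' (V : Set (X ⧸ Z))) :=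
      (Submodule.closed_of_finiteDimensional V).preimage hcont
    refine Submodule.eq_top_iff'.2 fun q => ?_
    obtain ⟨y, rfl⟩ := Z.mkQ_surjective q
    refine hd.induction_on (p := fun y => Z.mkQ y ∈ V) y hcl fun a => ?_
    rw [Finsupp.linearCombination_apply, Finsupp.sum, map_sum]
    exact Submodule.sum_mem _ fun i _ => by
      rw [map_smul]; exact Submodule.smul_mem _ _ (hmem i)
  have hfin : FiniteDimensional ℝ (X ⧸ Z) := by
    refine Module.Finite.of_surjective V.subtype fun q => ⟨⟨q, ?_⟩, rfl⟩
    rw [hVtop]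
    exact Submodule.mem_top
  have hproper : ProperSpace (X ⧸ Z) := FiniteDimensional.proper ℝ _
  obtain ⟨q, -, φ, hφ, hq⟩ := tendsto_subseq_of_bounded
    (Metric.isBounded_closedBall (x := (0 : X ⧸ Z)) (r := R)) (x := fun n => Z.mkQ (u n))
    (fun n => by
      rw [mem_closedBall_zero_iff]
      exact (Submodule.Quotient.norm_mk_le Z (u n)).trans (hu n))
  obtain ⟨M, hM⟩ := Metric.cauchySeq_iff.1 hq.cauchySeq ε hε
  set m := max M N
  have hlt : ‖Z.mkQ (u (φ m) - u (φ (m + 1)))‖ < ε := by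
    rw [map_sub, ← dist_eq_norm]
    exact hM m (le_max_left _ _) (m + 1) ((le_max_left _ _).trans (Nat.le_succ _))
  obtain ⟨y, hy, hyε⟩ := Submodule.Quotient.norm_mk_lt (S := Z)
    (Z.mkQ (u (φ m) - u (φ (m + 1)))) (sub_pos.2 hlt)
  rw [add_sub_cancel] at hyε
  have hz : u (φ m) - u (φ (m + 1)) - y ∈ closure (S.map (L x) : Set X) := by
    have : u (φ m) - u (φ (m + 1)) - y ∈ Z := by
      rw [← Submodule.ker_mkQ Z, LinearMap.mem_ker, map_sub, sub_eq_zero]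
      exact hy.symm
    exact this
  obtain ⟨_, ⟨W, hW, rfl⟩, hWy⟩ := Metric.mem_closure_iff.1 hz _ (sub_pos.2 hyε)
  refine ⟨W, φ m, φ (m + 1), fun i hi => ?_, hW.2, (le_max_right M N).trans hφ.le_apply,
    hφ m.lt_succ_self, ?_⟩
  · by_contra h
    exact absurd ((Finsupp.mem_supported ℝ W).1 hW.1 (Finsupp.mem_support_iff.2 h))
      (by simpa using hi)
  · calc ‖u (φ m) - u (φ (m + 1)) - L x W‖
        = ‖y + (u (φ m) - u (φ (m + 1)) - y - L x W)‖ := by congr 1; abel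
      _ ≤ ‖y‖ + ‖u (φ m) - u (φ (m + 1)) - y - L x W‖ := norm_add_le _ _
      _ < ε := by rw [dist_eq_norm] at hWy; linarith

/-- If `ℓ₁` embeds in `X`, there are successive bounded zero-sum blocks `W n`, carried by the
intervals `[b n, b (n + 1))`, whose convex combinations are bounded away from `0`. The block `W n`
approximates the image of a difference of two unit vectors. -/
theorem exists_zeroSum_blocks (x : ℕ → X) (hd : DenseRange (L x)) (f : ℓ₁ →L[ℝ] X) {c : ℝ}
    (hc : 0 < c) (hf : ∀ u, c * ‖u‖ ≤ ‖f u‖) :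
    ∃ (b : ℕ → ℕ) (W : ℕ → ℕ →₀ ℝ) (R δ : ℝ), StrictMono b ∧ b 0 = 0 ∧
      (∀ n i, W n i ≠ 0 → b n ≤ i ∧ i < b (n + 1)) ∧
      (∀ n, L (fun _ => (1 : ℝ)) (W n) = 0) ∧ (∀ n, ‖L x (W n)‖ ≤ R) ∧ 0 < δ ∧
      ∀ t : ℕ →₀ ℝ, (∀ n, 0 ≤ t n) → L (fun _ => (1 : ℝ)) t = 1 →
        δ ≤ ‖L (fun n => L x (W n)) t‖ := by
  let e : ℕ → ℓ₁ := fun n => lp.single 1 n (1 : ℝ)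
  have he : ∀ n, ‖e n‖ = 1 := fun n => by simp [e, lp.norm_single]
  have hu : ∀ n, ‖f (e n)‖ ≤ ‖f‖ := fun n => by simpa [he] using f.le_opNorm (e n)
  have step : ∀ N : ℕ, ∃ (N' : ℕ) (W : ℕ →₀ ℝ) (j k : ℕ),
      (∀ i, W i ≠ 0 → N ≤ i ∧ i < N') ∧ L (fun _ => (1 : ℝ)) W = 0 ∧
      N ≤ j ∧ j < k ∧ k < N' ∧ ‖f (e j) - f (e k) - L x W‖ < c / 2 := by
    intro N
    obtain ⟨W, j, k, h1, h2, h3, h4, h5⟩ := exists_zeroSum_approx x hd (fun n => f (e n)) hu N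
      (half_pos hc)
    refine ⟨max (k + 1) (W.support.sup id + 1), W, j, k, fun i hi => ⟨?_, ?_⟩, h2, h3, h4, ?_, h5⟩
    · by_contra! h
      exact hi (h1 i h)
    · have := Finset.le_sup (f := id) (Finsupp.mem_support_iff.2 hi)
      simp only [id] at this
      omega
    · omega
  choose nxt W j k hsupp hsum hNj hjk hkN hnorm using step
  let b : ℕ → ℕ := fun n => nxt^[n] 0
  have hb1 : ∀ n, b (n + 1) = nxt (b n) := fun n => Function.iterate_succ_apply' nxt n 0
  have hb : StrictMono b := strictMono_nat_of_lt_succ fun n => by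
    rw [hb1]
    exact ((hNj (b n)).trans_lt (hjk _)).trans (hkN _)
  have hJ : StrictMono fun n => j (b n) := strictMono_nat_of_lt_succ fun n =>
    ((hjk (b n)).trans (hkN _)).trans_le (by rw [← hb1]; exact hNj _)
  have hJK : ∀ n m, k (b n) ≠ j (b m) := by
    intro n m h
    rcases lt_or_ge n m with hnm | hnm
    · have h1 : b (n + 1) ≤ b m := hb.monotone hnm
      have h2 := hkN (b n)
      have h3 := hNj (b m)
      rw [hb1] at h1
      omega
    · have h1 : j (b m) ≤ j (b n) := hJ.monotone hnm
      have h2 := hjk (b n)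
      omega
  refine ⟨b, fun n => W (b n), ‖f‖ + ‖f‖ + c / 2, c / 2, hb, rfl, fun n i h => ?_,
    fun n => hsum _, fun n => ?_, half_pos hc, fun t ht ht1 => ?_⟩
  · rw [hb1]; exact hsupp _ i h
  · calc ‖L x (W (b n))‖ = ‖f (e (j (b n))) - f (e (k (b n))) -
          (f (e (j (b n))) - f (e (k (b n))) - L x (W (b n)))‖ := by congr 1; abel
      _ ≤ _ := (norm_sub_le _ _).trans (add_le_add ((norm_sub_le _ _).trans
          (add_le_add (hu _) (hu _))) (hnorm _).le)
  · have ht1' : ∑ n ∈ t.support, t n = 1 := by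
      simpa [Finsupp.linearCombination_apply, Finsupp.sum] using ht1
    let D : ℓ₁ := ∑ n ∈ t.support, t n • (e (j (b n)) - e (k (b n)))
    have hDcoord : ∀ m ∈ t.support, D (j (b m)) = t m := by
      intro m hm
      have : D (j (b m)) = ∑ n ∈ t.support, if n = m then t n else 0 := by
        simp only [D, e, lp.coeFn_sum, Finset.sum_apply, lp.coeFn_smul, lp.coeFn_sub,
          Pi.smul_apply, Pi.sub_apply, lp.coeFn_single, Pi.single_apply]
        refine Finset.sum_congr rfl fun n _ => ?_
        rw [if_neg (hJK n m).symm]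
        by_cases h : n = m
        · simp [h]
        · rw [if_neg fun h' => h (hJ.injective h'.symm)]
          simp [h]
      rw [this, Finset.sum_ite_eq' t.support m, if_pos hm]
    have hD : 1 ≤ ‖D‖ := by
      have h := lp.sum_rpow_le_norm_rpow (p := 1) (by simp) D (t.support.image fun n => j (b n))
      rw [Finset.sum_image fun _ _ _ _ h => hJ.injective h] at h
      simp only [ENNReal.toReal_one, Real.rpow_one] at h
      refine le_trans (le_of_eq ?_) h
      rw [← ht1']
      refine Finset.sum_congr rfl fun n hn => ?_
      rw [hDcoord n hn, Real.norm_of_nonneg (ht n)]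
    -- only an error `c / 2`, uniform in `n`, is needed for convex combinations
    have hdiff : ‖f D - L (fun n => L x (W (b n))) t‖ ≤ c / 2 := by
      have : f D - L (fun n => L x (W (b n))) t = ∑ n ∈ t.support,
          t n • (f (e (j (b n))) - f (e (k (b n))) - L x (W (b n))) := by
        simp only [D, map_sum, map_smul, map_sub, smul_sub, Finset.sum_sub_distrib]
        rfl
      rw [this]
      calc _ ≤ ∑ n ∈ t.support, t n * (c / 2) := norm_sum_le_of_le _ fun n _ => by
            rw [norm_smul, Real.norm_of_nonneg (ht n)]
            exact mul_le_mul_of_nonneg_left (hnorm _).le (ht n)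
        _ = c / 2 := by rw [← Finset.sum_mul, ht1', one_mul]
    have h1 := hf D
    have h2 := norm_sub_norm_le (f D) (L (fun n => L x (W (b n))) t)
    nlinarith

theorem exists_block_index {b : ℕ → ℕ} (hb : StrictMono b) (hb0 : b 0 = 0) :
    ∃ β : ℕ → ℕ, Monotone β ∧ ∀ i n, β i = n ↔ b n ≤ i ∧ i < b (n + 1) := by
  have h : ∀ i, ∃ n, b n ≤ i ∧ i < b (n + 1) := by
    intro i
    refine ⟨Nat.findGreatest (fun n => b n ≤ i) i, ?_, ?_⟩
    · exact Nat.findGreatest_spec (P := fun n => b n ≤ i) (Nat.zero_le i) (by simp [hb0])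
    · by_contra! hcon
      have := Nat.le_findGreatest (P := fun n => b n ≤ i) (hb.le_apply.trans hcon) hcon
      omega
  choose β h1 h2 using h
  have hle : ∀ i n, b n ≤ i → n ≤ β i := by
    intro i n hn
    by_contra! hlt
    have : b (β i + 1) ≤ b n := hb.monotone hlt
    have := h2 i
    omega
  refine ⟨β, fun i k hik => hle _ _ ((h1 i).trans hik), fun i n => ⟨?_, fun h => ?_⟩⟩
  · rintro rfl
    exact ⟨h1 i, h2 i⟩
  · refine le_antisymm ?_ (hle i n h.1)
    by_contra! hlt
    have : b (n + 1) ≤ b (β i) := hb.monotone hlt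
    have := h1 i
    omega

/-! ### Doubling the blocks and the projection -/

/-- There are differences `d i = x (p i) - x (q i)`, with `p` and `q` placing two adjacent copies of
each block, such that restricting `L d a` to a set of blocks is controlled by `‖L x a‖`, while
`‖L d a‖` controls `‖L x a‖` when `a` has zero sum on each block. -/
theorem exists_doubling (x : ℕ → X) {C : ℝ} (hC : 0 < C)
    (hx : ∀ φ : ℕ → ℕ, StrictMono φ → ∀ a : ℕ →₀ ℝ,
      ‖L x a‖ ≤ C * ‖L (x ∘ φ) a‖ ∧ ‖L (x ∘ φ) a‖ ≤ C * ‖L x a‖)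
    {b β : ℕ → ℕ} (hb : StrictMono b) (hβ : Monotone β)
    (hbβ : ∀ i n, β i = n ↔ b n ≤ i ∧ i < b (n + 1)) :
    ∃ (d : ℕ → X) (K : ℝ), 0 < K ∧
      (∀ (E : Set ℕ) (a : ℕ →₀ ℝ), ‖L ((β ⁻¹' E).indicator d) a‖ ≤ K * ‖L x a‖) ∧
      ∀ a : ℕ →₀ ℝ, (∀ n, L ((β ⁻¹' {n}).indicator (1 : ℕ → ℝ)) a = 0) →
        ‖L x a‖ ≤ K * ‖L d a‖ := by
  let p : ℕ → ℕ := fun i => i + b (β i)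
  let q : ℕ → ℕ := fun i => i + b (β i + 1)
  have hp : StrictMono p := fun i j h =>
    add_lt_add_of_lt_of_le h (hb.monotone (hβ h.le))
  have hq : StrictMono q := fun i j h =>
    add_lt_add_of_lt_of_le h (hb.monotone (Nat.succ_le_succ (hβ h.le)))
  -- `p` maps the block `n` into `[2 b n, b n + b (n + 1))` and `q` maps it into
  -- `[b n + b (n + 1), 2 b (n + 1))`; these intervals are numbered `2 n` and `2 n + 1` by `γ`
  let γ : ℕ → ℕ := fun m =>
    if m < b (β (m / 2)) + b (β (m / 2) + 1) then 2 * β (m / 2) else 2 * β (m / 2) + 1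
  have hγ : Monotone γ := by
    intro i j hij
    have h := hβ (Nat.div_le_div_right (c := 2) hij)
    simp only [γ]
    rcases h.eq_or_lt with h | h
    · rw [h]; split_ifs <;> omega
    · split_ifs <;> omega
  have hpβ : ∀ i, β (p i / 2) = β i := fun i => by
    have := (hbβ i (β i)).1 rfl
    rw [hbβ]
    simp only [p]
    omega
  have hqβ : ∀ i, β (q i / 2) = β i := fun i => by
    have := (hbβ i (β i)).1 rfl
    rw [hbβ]
    simp only [q]
    omega
  have hpγ : ∀ i, γ (p i) = 2 * β i := fun i => by
    have := (hbβ i (β i)).1 rfl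
    simp only [γ, hpβ]
    rw [if_pos]
    simp only [p]
    omega
  have hqγ : ∀ i, γ (q i) = 2 * β i + 1 := fun i => by
    have := (hbβ i (β i)).1 rfl
    simp only [γ, hqβ]
    rw [if_neg]
    simp only [q]
    omega
  -- `T` sends `e i` to `e (p i) - e (q i)`
  let T : (ℕ →₀ ℝ) → ℕ →₀ ℝ := fun a => a.mapDomain p - a.mapDomain q
  have hT : ∀ (v : ℕ → X) (a : ℕ →₀ ℝ), L v (T a) = L (v ∘ p) a - L (v ∘ q) a := by
    intro v a
    simp only [T, map_sub, Finsupp.linearCombination_mapDomain]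
  have hTR : ∀ (v : ℕ → ℝ) (a : ℕ →₀ ℝ), L v (T a) = L (v ∘ p) a - L (v ∘ q) a := by
    intro v a
    simp only [T, map_sub, Finsupp.linearCombination_mapDomain]
  have hT' : ∀ (v : ℕ → X) (a : ℕ →₀ ℝ), L v (T a) = L (v ∘ p - v ∘ q) a := by
    intro v a
    rw [hT]
    simp only [Finsupp.linearCombination_apply, Finsupp.sum, Pi.sub_apply, smul_sub,
      Finset.sum_sub_distrib]
  have hpow : (0 : ℝ) < C * C * (C + C) := by positivity
  have hpow2 : (0 : ℝ) < C * (C * C) := by positivity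
  refine ⟨x ∘ p - x ∘ q, C * C * (C + C) + C * (C * C), by positivity, fun E a => ?_,
    fun a ha => ?_⟩
  · -- `m ↦ β (m / 2)` numbers the double blocks, on which `T a` always has zero sum
    have hmono : Monotone fun m => β (m / 2) := fun i j h => hβ (Nat.div_le_div_right h)
    have h := norm_linearCombination_indicator_le x hC hx hmono E (T a) (fun n _ => by
      rw [hTR, sub_eq_zero]
      congr 2
      funext i
      simp only [Function.comp_apply, indicator, mem_preimage, hpβ, hqβ, Pi.one_apply])
    have e1 : L ((β ⁻¹' E).indicator (x ∘ p - x ∘ q)) a =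
        L (fun i => ((fun m => β (m / 2)) ⁻¹' E).indicator x i) (T a) := by
      rw [hT']
      congr 2
      funext i
      by_cases hi : β i ∈ E <;> simp [indicator, hpβ, hqβ, hi]
    rw [e1]
    have h2 : ‖L x (T a)‖ ≤ (C + C) * ‖L x a‖ := by
      rw [hT, add_mul]
      exact (norm_sub_le _ _).trans (add_le_add (hx p hp a).2 (hx q hq a).2)
    calc _ ≤ C * C * ((C + C) * ‖L x a‖) := by refine h.trans ?_; gcongr
      _ = C * C * (C + C) * ‖L x a‖ := by ring
      _ ≤ _ := by gcongr; linarith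
  · -- the zero-sum blocks of odd number are the `q`-copies; deleting them leaves `L (x ∘ p) a`
    have h := norm_linearCombination_indicator_le x hC hx hγ {n | Even n} (T a) (fun n hn => by
      obtain ⟨k, rfl⟩ := Nat.not_even_iff_odd.1 hn
      rw [hTR]
      have e1 : (γ ⁻¹' {2 * k + 1}).indicator (1 : ℕ → ℝ) ∘ p = 0 := by
        funext i
        have : 2 * β i ≠ 2 * k + 1 := by omega
        simp [indicator, hpγ, this]
      have e2 : (γ ⁻¹' {2 * k + 1}).indicator (1 : ℕ → ℝ) ∘ q =
          (β ⁻¹' {k}).indicator (1 : ℕ → ℝ) := by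
        funext i
        by_cases hi : β i = k <;> simp [indicator, hqγ, hi]
      rw [e1, e2, ha k, sub_zero]
      simp)
    have e1 : L (fun i => (γ ⁻¹' {n | Even n}).indicator x i) (T a) = L (x ∘ p) a := by
      rw [hT']
      congr 2
      funext i
      simp [indicator, hpγ, hqγ]
    rw [e1, hT'] at h
    calc ‖L x a‖ ≤ C * (C * C * ‖L (x ∘ p - x ∘ q) a‖) := by
          refine (hx p hp a).1.trans ?_; gcongr
      _ = C * (C * C) * ‖L (x ∘ p - x ∘ q) a‖ := by ring
      _ ≤ _ := by gcongr; linarith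

/-- Given `d` as provided by `exists_doubling` and blocks `W n` such that the convex combinations of
the `L d (W n)` are bounded away from `0`, the space `ℓ₁` is a retract of `X`. -/
theorem exists_complemented_l1_of_blocks [CompleteSpace X] (x : ℕ → X) (hd : DenseRange (L x))
    {β : ℕ → ℕ} {d : ℕ → X} {K R δ : ℝ} (hδ : 0 < δ)
    (hup : ∀ (E : Set ℕ) (a : ℕ →₀ ℝ), ‖L ((β ⁻¹' E).indicator d) a‖ ≤ K * ‖L x a‖)
    (W : ℕ → ℕ →₀ ℝ) (hWβ : ∀ n i, W n i ≠ 0 → β i = n) (hWR : ∀ n, ‖L x (W n)‖ ≤ R)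
    (hlow : ∀ t : ℕ →₀ ℝ, (∀ n, 0 ≤ t n) → L (fun _ => (1 : ℝ)) t = 1 →
        δ ≤ ‖L (fun n => L d (W n)) t‖) :
    ∃ (F : ℓ₁ →L[ℝ] X) (G : X →L[ℝ] ℓ₁), ∀ u, G (F u) = u := by
  classical
  -- a functional bounded below on all `L d (W n)`
  obtain ⟨g, r, hr, hgr⟩ : ∃ (g : X →L[ℝ] ℝ) (r : ℝ), 0 < r ∧ ∀ n, r ≤ g (L d (W n)) := by
    let S : Set (ℕ →₀ ℝ) := {t | (∀ n, 0 ≤ t n) ∧ L (fun _ => (1 : ℝ)) t = 1}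
    have hS : Convex ℝ S := by
      rintro s ⟨hs, hs1⟩ t ⟨ht, ht1⟩ α α' hα hα' hαα
      refine ⟨fun n => ?_, ?_⟩
      · have := hs n
        have := ht n
        simp only [Finsupp.add_apply, Finsupp.smul_apply, smul_eq_mul]
        positivity
      · simp only [map_add, map_smul, hs1, ht1, smul_eq_mul, mul_one, hαα]
    obtain ⟨g, r, h1, h2⟩ := geometric_hahn_banach_open (convex_ball (0 : X) δ) isOpen_ball
      (hS.linear_image (L fun n => L d (W n))) (by
        rw [Set.disjoint_left]
        rintro _ hy ⟨t, ht, rfl⟩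
        exact absurd (mem_ball_zero_iff.1 hy) (hlow t ht.1 ht.2).not_gt)
    refine ⟨g, r, by simpa using h1 0 (mem_ball_self hδ), fun n => ?_⟩
    refine h2 _ ⟨Finsupp.single n 1, ⟨fun m => ?_, by simp⟩, by simp⟩
    rw [Finsupp.single_apply]
    split_ifs <;> simp
  let e : ℕ → ℓ₁ := fun n => lp.single 1 n (1 : ℝ)
  have he : ∀ n, ‖e n‖ = 1 := fun n => by simp [e, lp.norm_single]
  have hdense : DenseRange (L e) := by
    intro u
    have h := lp.hasSum_single (p := 1) ENNReal.one_ne_top u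
    refine mem_closure_of_tendsto h (Eventually.of_forall fun s => ?_)
    refine ⟨∑ i ∈ s, Finsupp.single i (u i), ?_⟩
    simp [e, map_sum, ← lp.single_smul]
  have hnorm : ∀ a : ℕ →₀ ℝ, ‖L e a‖ = ∑ n ∈ a.support, |a n| := by
    intro a
    have h := lp.norm_sum_single (p := 1) (E := fun _ : ℕ => ℝ) (by simp) (fun n => a n) a.support
    simp only [ENNReal.toReal_one, Real.rpow_one, Real.norm_eq_abs] at h
    rw [← h]
    simp [e, Finsupp.linearCombination_apply, Finsupp.sum, ← lp.single_smul]
  -- `G` collects on each block the values of `g ∘ d`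
  let G₀ : (ℕ →₀ ℝ) →ₗ[ℝ] ℓ₁ := L fun i => g (d i) • e (β i)
  have hG₀ : ∀ a, ‖G₀ a‖ ≤ (2 * (‖g‖ * K)) * ‖L x a‖ := by
    intro a
    -- `∑ |F n|` is split according to the sign of `F n`, each part being the value of `g` at a
    -- restriction of `L d a` to a set of blocks
    let F : ℕ → ℝ := fun n => ∑ i ∈ a.support with β i = n, a i * g (d i)
    have hF : ∀ E : Set ℕ, ∀ s : Finset ℕ, (∀ n, n ∈ s ↔ n ∈ a.support.image β ∧ n ∈ E) →
        |∑ n ∈ s, F n| ≤ ‖g‖ * K * ‖L x a‖ := by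
      intro E s hs
      have e1 : ∑ n ∈ s, F n = g (L ((β ⁻¹' E).indicator d) a) := by
        have e2 : g (L ((β ⁻¹' E).indicator d) a) =
            ∑ i ∈ a.support with β i ∈ s, a i * g (d i) := by
          rw [Finsupp.linearCombination_apply, Finsupp.sum, map_sum, Finset.sum_filter]
          refine Finset.sum_congr rfl fun i hi => ?_
          have : β i ∈ s ↔ β i ∈ E := by
            rw [hs]
            exact and_iff_right (Finset.mem_image_of_mem _ hi)
          by_cases h : β i ∈ E <;> simp [indicator, this, h]
        rw [e2, ← Finset.sum_fiberwise_of_maps_to (t := s) (g := β)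
          (fun i hi => (Finset.mem_filter.1 hi).2)]
        refine Finset.sum_congr rfl fun n hn => ?_
        refine Finset.sum_congr ?_ fun _ _ => rfl
        ext i
        simp only [Finset.mem_filter]
        constructor
        · rintro ⟨h1, rfl⟩; exact ⟨⟨h1, hn⟩, rfl⟩
        · rintro ⟨⟨h1, -⟩, h2⟩; exact ⟨h1, h2⟩
      rw [e1, ← Real.norm_eq_abs, mul_assoc]
      exact (g.le_opNorm _).trans (by gcongr; exact hup E a)
    have e1 : G₀ a = ∑ n ∈ a.support.image β, F n • e n := by
      have : G₀ a = ∑ i ∈ a.support, (a i * g (d i)) • e (β i) := by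
        simp [G₀, Finsupp.linearCombination_apply, Finsupp.sum, smul_smul]
      rw [this, ← Finset.sum_fiberwise_of_maps_to (t := a.support.image β) (g := β)
        (fun i hi => Finset.mem_image_of_mem _ hi)]
      refine Finset.sum_congr rfl fun n _ => ?_
      rw [Finset.sum_smul]
      refine Finset.sum_congr rfl fun i hi => ?_
      rw [(Finset.mem_filter.1 hi).2]
    have h1 := hF {n | 0 ≤ F n} ((a.support.image β).filter fun n => 0 ≤ F n) (by simp)
    have h2 := hF {n | ¬ 0 ≤ F n} ((a.support.image β).filter fun n => ¬ 0 ≤ F n) (by simp)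
    calc ‖G₀ a‖ ≤ ∑ n ∈ a.support.image β, |F n| := by
          rw [e1]
          refine norm_sum_le_of_le _ fun n _ => ?_
          rw [norm_smul, he, mul_one, Real.norm_eq_abs]
      _ = (∑ n ∈ a.support.image β with 0 ≤ F n, F n) -
            ∑ n ∈ a.support.image β with ¬ 0 ≤ F n, F n := by
          rw [← Finset.sum_filter_add_sum_filter_not _ (fun n => 0 ≤ F n) fun n => |F n|,
            sub_eq_add_neg, ← Finset.sum_neg_distrib]
          congr 1
          · exact Finset.sum_congr rfl fun n hn => abs_of_nonneg (Finset.mem_filter.1 hn).2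
          · exact Finset.sum_congr rfl fun n hn =>
              abs_of_neg (not_le.1 (Finset.mem_filter.1 hn).2)
      _ ≤ _ := by
          have := le_abs_self (∑ n ∈ a.support.image β with 0 ≤ F n, F n)
          have := neg_le_abs (∑ n ∈ a.support.image β with ¬ 0 ≤ F n, F n)
          linarith
  have hG₀W : ∀ n, G₀ (W n) = g (L d (W n)) • e n := by
    intro n
    simp only [G₀, Finsupp.linearCombination_apply, Finsupp.sum, map_sum, Finset.sum_smul]
    refine Finset.sum_congr rfl fun i hi => ?_
    rw [hWβ n i (Finsupp.mem_support_iff.1 hi), map_smul, smul_eq_mul, smul_smul]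
  let F₀ : (ℕ →₀ ℝ) →ₗ[ℝ] X := L fun n => (g (L d (W n)))⁻¹ • L x (W n)
  have hF₀ : ∀ a, ‖F₀ a‖ ≤ (r⁻¹ * R) * ‖L e a‖ := by
    intro a
    rw [hnorm, Finset.mul_sum]
    refine norm_sum_le_of_le _ fun n _ => ?_
    change ‖a n • (g (L d (W n)))⁻¹ • L x (W n)‖ ≤ _
    have hpos := hr.trans_le (hgr n)
    rw [norm_smul, norm_smul, Real.norm_eq_abs, mul_comm, Real.norm_of_nonneg (by positivity)]
    gcongr
    · exact hgr n
    · exact hWR n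
  let G : X →L[ℝ] ℓ₁ := G₀.extendOfNorm (L x)
  let F : ℓ₁ →L[ℝ] X := F₀.extendOfNorm (L e)
  have hGF : ∀ n, G (F (e n)) = e n := by
    intro n
    have h1 : F (e n) = (g (L d (W n)))⁻¹ • L x (W n) := by
      have := LinearMap.extendOfNorm_eq hdense ⟨_, hF₀⟩ (Finsupp.single n 1)
      simpa [F₀] using this
    have h2 : G (L x (W n)) = g (L d (W n)) • e n := by
      rw [← hG₀W n]
      exact LinearMap.extendOfNorm_eq hd ⟨_, hG₀⟩ (W n)
    rw [h1, map_smul, h2, smul_smul, inv_mul_cancel₀ (hr.trans_le (hgr n)).ne', one_smul]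
  refine ⟨F, G, fun u => ?_⟩
  refine hdense.induction_on (p := fun u => G (F u) = u) u
    (isClosed_eq (by fun_prop) continuous_id) fun a => ?_
  simp only [Finsupp.linearCombination_apply, Finsupp.sum, map_sum, map_smul, hGF]


end

/-- Let `X` be a real Banach space with a spreading Schauder basis.  If `X`
contains an isomorphic copy of `ℓ₁`, then `X` contains a complemented isomorphic copy of
`ℓ₁`. -/
theorem statement11 {X : Type*} [NormedAddCommGroup X] [NormedSpace ℝ X] [CompleteSpace X]
    (x : ℕ → X)
    (hbasis : ∀ y : X, ∃! a : ℕ → ℝ,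
      Filter.Tendsto (fun N : ℕ => ∑ i ∈ Finset.range N, a i • x i)
        Filter.atTop (nhds y))
    (hspread : ∀ φ : ℕ → ℕ, StrictMono φ → ∃ A B : ℝ, 0 < A ∧ 0 < B ∧
      ∀ (s : Finset ℕ) (a : ℕ → ℝ),
        A * ‖∑ n ∈ s, a n • x n‖ ≤ ‖∑ n ∈ s, a n • x (φ n)‖ ∧
        ‖∑ n ∈ s, a n • x (φ n)‖ ≤ B * ‖∑ n ∈ s, a n • x n‖)
    (hl1 : ∃ (f : (lp (fun _ : ℕ => ℝ) 1) →L[ℝ] X) (c : ℝ),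
      0 < c ∧ ∀ u : lp (fun _ : ℕ => ℝ) 1, c * ‖u‖ ≤ ‖f u‖) :
    ∃ (f : (lp (fun _ : ℕ => ℝ) 1) →L[ℝ] X) (c : ℝ) (P : X →L[ℝ] X),
      0 < c ∧ (∀ u : lp (fun _ : ℕ => ℝ) 1, c * ‖u‖ ≤ ‖f u‖) ∧
      (∀ y : X, P (P y) = P y) ∧ Set.range P = Set.range f := by
  have hdense : DenseRange (Finsupp.linearCombination ℝ x) := by
    intro y
    obtain ⟨a, ha, -⟩ := hbasis y
    refine mem_closure_of_tendsto ha (Eventually.of_forall fun N => ?_)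
    exact ⟨∑ i ∈ Finset.range N, Finsupp.single i (a i), by simp [map_sum]⟩
  obtain ⟨C, hC, hx⟩ := exists_uniform_spreading_const x hspread
  obtain ⟨f, c, hc, hf⟩ := hl1
  obtain ⟨b, W, R, δ, hb, hb0, hWb, hW0, hWR, hδ, hlow⟩ :=
    exists_zeroSum_blocks x hdense f hc hf
  obtain ⟨β, hβ, hbβ⟩ := exists_block_index hb hb0
  have hWβ : ∀ n i, W n i ≠ 0 → β i = n := fun n i h => (hbβ i n).2 (hWb n i h)
  obtain ⟨d, K, hK, hup, hdn⟩ := exists_doubling x hC hx hb hβ hbβ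
  have hWsum : ∀ n m,
      Finsupp.linearCombination ℝ ((β ⁻¹' {n}).indicator (1 : ℕ → ℝ)) (W m) = 0 := by
    intro n m
    have hval : ∀ i ∈ (W m).support,
        W m i • (β ⁻¹' {n}).indicator (1 : ℕ → ℝ) i = (if m = n then 1 else 0) * W m i := by
      intro i hi
      have := hWβ m i (Finsupp.mem_support_iff.1 hi)
      by_cases h : m = n <;> simp [indicator, this, h]
    have h0 := hW0 m
    simp only [Finsupp.linearCombination_apply, Finsupp.sum, smul_eq_mul, mul_one] at h0
    rw [Finsupp.linearCombination_apply, Finsupp.sum, Finset.sum_congr rfl hval,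
      ← Finset.mul_sum, h0, mul_zero]
  have hlow' : ∀ t : ℕ →₀ ℝ, (∀ n, 0 ≤ t n) →
      Finsupp.linearCombination ℝ (fun _ => (1 : ℝ)) t = 1 →
      δ / K ≤ ‖Finsupp.linearCombination ℝ
        (fun n => Finsupp.linearCombination ℝ d (W n)) t‖ := by
    intro t ht ht1
    have hcomp : ∀ v : ℕ → X,
        Finsupp.linearCombination ℝ v (Finsupp.linearCombination ℝ W t) =
          Finsupp.linearCombination ℝ (fun n => Finsupp.linearCombination ℝ v (W n)) t := by
      intro v
      simp only [Finsupp.linearCombination_apply ℝ t, Finsupp.sum, map_sum, map_smul]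
    have h1 := hdn (Finsupp.linearCombination ℝ W t) fun n => by
      rw [Finsupp.linearCombination_apply ℝ t, Finsupp.sum, map_sum]
      exact Finset.sum_eq_zero fun m _ => by rw [map_smul, hWsum, smul_zero]
    rw [hcomp, hcomp] at h1
    rw [div_le_iff₀' hK]
    exact (hlow t ht ht1).trans h1
  obtain ⟨F, G, hGF⟩ := exists_complemented_l1_of_blocks x hdense (div_pos hδ hK) hup W hWβ
    hWR hlow'
  refine ⟨F, (‖G‖ + 1)⁻¹, F.comp G, by positivity, fun u => ?_, fun y => ?_, ?_⟩
  · rw [inv_mul_le_iff₀ (by positivity)]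
    calc ‖u‖ = ‖G (F u)‖ := by rw [hGF]
      _ ≤ ‖G‖ * ‖F u‖ := G.le_opNorm _
      _ ≤ _ := by gcongr; linarith
  · simp [hGF]
  · refine Subset.antisymm ?_ ?_
    · rintro _ ⟨y, rfl⟩
      exact ⟨G y, rfl⟩
    · rintro _ ⟨u, rfl⟩
      exact ⟨F u, by simp [hGF]⟩
end

section
/- Let H be an infinite-dimensional real Hilbert space. Then there exists a fixed-point-free map T : B_H → B_H that is Lipschitz and uniformly asymptotically regular. -/
/-!
The map is built on `ℓ²`, which embeds isometrically in every infinite-dimensional Hilbert space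
`H` by some `V`; if `F` works on `ℓ²`, then `V ∘ F ∘ V†` works on `H`.

Let `K` be the set of unit vectors of `ℓ²` with nonnegative coordinates. Reading `xᵢ²` as a mass
at `i`, the points of `K` are the probability distributions on `ℕ`. There are two ingredients.

* `K` is a Lipschitz retract of the ball (`toK`): replace `x₀` by `√(x₀² + (1 - ‖x‖)²)` and the
  other coordinates by their absolute values. The result has squared norm
  `‖x‖² + (1 - ‖x‖)² ≥ 1/2`, so normalizing it is a Lipschitz operation.
* A slow transport of mass to the right (`flow`): each coordinate keeps the fraction `1 - s²` of
  its mass and sends the fraction `s²` to its right neighbour. The speed is `s = ‖D x‖ / 2`, where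
  `(D x)ᵢ = 2⁻ⁱ xᵢ`. This map preserves `K` and is Lipschitz, and it moves `x` by at most `‖D x‖`.

The quantity `Λ = ‖D x‖²` is linear in the masses and a shift to the right divides it by `4`, so
one step of the flow replaces `Λ` by `Λ (1 - 3 Λ / 16)`. As `Λ > 0` on `K`, there is no fixed
point; and `Λ = O(1 / n)` after `n` steps, uniformly on `K`, which bounds the displacements.
The speed has infimum `0` on `K` but does not attain it: the mass escapes to infinity.
-/

noncomputable section

/-- The real sequence space `ℓ²`. -/
abbrev L2 : Type := lp (fun _ : ℕ => ℝ) 2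

namespace L2

theorem summable_sq (x : L2) : Summable fun i => (x i) ^ 2 := by
  simpa [pow_two] using lp.summable_inner (𝕜 := ℝ) x x

theorem norm_sq (x : L2) : ‖x‖ ^ 2 = ∑' i, (x i) ^ 2 := by
  rw [← real_inner_self_eq_norm_sq, ← (lp.hasSum_inner (𝕜 := ℝ) x x).tsum_eq]
  simp [pow_two]

/-- A square-summable sequence as an element of `ℓ²`. -/
def mk (f : ℕ → ℝ) (hf : Summable fun i => f i ^ 2) : L2 :=
  ⟨f, memℓp_gen (by simpa using hf)⟩

@[simp] theorem mk_apply (f : ℕ → ℝ) (hf : Summable fun i => f i ^ 2) (i : ℕ) :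
    mk f hf i = f i := rfl

theorem norm_sq_le_add {z u v : L2} (h : ∀ i, z i ^ 2 ≤ u i ^ 2 + v i ^ 2) :
    ‖z‖ ^ 2 ≤ ‖u‖ ^ 2 + ‖v‖ ^ 2 := by
  rw [norm_sq, norm_sq, norm_sq, ← (summable_sq u).tsum_add (summable_sq v)]
  exact (summable_sq z).tsum_le_tsum h ((summable_sq u).add (summable_sq v))

theorem norm_sq_eq_add {z u v : L2} (h : ∀ i, z i ^ 2 = u i ^ 2 + v i ^ 2) :
    ‖z‖ ^ 2 = ‖u‖ ^ 2 + ‖v‖ ^ 2 := by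
  rw [norm_sq, norm_sq, norm_sq, ← (summable_sq u).tsum_add (summable_sq v)]
  exact tsum_congr h

/-- The coordinatewise Euclidean norm `√(uᵢ² + vᵢ²)` of two sequences: the masses `uᵢ²` and `vᵢ²`
are added. -/
def hyp (u v : L2) : L2 :=
  mk (fun i => √(u i ^ 2 + v i ^ 2)) (by
    have := (summable_sq u).add (summable_sq v)
    refine this.congr fun i => ?_
    rw [Real.sq_sqrt (by positivity)])

theorem hyp_apply (u v : L2) (i : ℕ) : hyp u v i = √(u i ^ 2 + v i ^ 2) := rfl

theorem hyp_apply_sq (u v : L2) (i : ℕ) : hyp u v i ^ 2 = u i ^ 2 + v i ^ 2 := by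
  rw [hyp_apply, Real.sq_sqrt (by positivity)]

theorem hyp_nonneg (u v : L2) (i : ℕ) : 0 ≤ hyp u v i := Real.sqrt_nonneg _

theorem norm_hyp_sq (u v : L2) : ‖hyp u v‖ ^ 2 = ‖u‖ ^ 2 + ‖v‖ ^ 2 :=
  norm_sq_eq_add (hyp_apply_sq u v)

theorem hyp_zero {x : L2} (hx : ∀ i, 0 ≤ x i) : hyp x 0 = x := by
  ext i
  simp [hyp_apply, Real.sqrt_sq (hx i)]

/-- The reverse triangle inequality in the Euclidean plane, squared. -/
theorem sqrt_sub_sqrt_sq_le (a b c d : ℝ) :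
    (√(a ^ 2 + b ^ 2) - √(c ^ 2 + d ^ 2)) ^ 2 ≤ (a - c) ^ 2 + (b - d) ^ 2 := by
  have h1 := Real.sq_sqrt (show 0 ≤ a ^ 2 + b ^ 2 by positivity)
  have h2 := Real.sq_sqrt (show 0 ≤ c ^ 2 + d ^ 2 by positivity)
  have h3 : a * c + b * d ≤ √(a ^ 2 + b ^ 2) * √(c ^ 2 + d ^ 2) := by
    rw [← Real.sqrt_mul (by positivity)]
    apply Real.le_sqrt_of_sq_le
    nlinarith [sq_nonneg (a * d - b * c)]
  nlinarith

theorem norm_hyp_sub_le (u v u' v' : L2) :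
    ‖hyp u v - hyp u' v'‖ ≤ ‖u - u'‖ + ‖v - v'‖ := by
  have h : ‖hyp u v - hyp u' v'‖ ^ 2 ≤ ‖u - u'‖ ^ 2 + ‖v - v'‖ ^ 2 :=
    norm_sq_le_add fun i => by
      simpa [hyp_apply] using sqrt_sub_sqrt_sq_le (u i) (v i) (u' i) (v' i)
  refine abs_le_of_sq_le_sq' ?_ (by positivity) |>.2
  nlinarith [norm_nonneg (u - u'), norm_nonneg (v - v'),
    mul_nonneg (norm_nonneg (u - u')) (norm_nonneg (v - v'))]

/-- The right shift `(x₀, x₁, …) ↦ (0, x₀, x₁, …)`. -/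
def shift (x : L2) : L2 :=
  mk (fun | 0 => 0 | i + 1 => x i) (by
    rw [← summable_nat_add_iff 1]
    exact summable_sq x)

@[simp] theorem shift_zero (x : L2) : shift x 0 = 0 := rfl

@[simp] theorem shift_succ (x : L2) (i : ℕ) : shift x (i + 1) = x i := rfl

theorem norm_shift_sq (x : L2) : ‖shift x‖ ^ 2 = ‖x‖ ^ 2 := by
  rw [norm_sq, norm_sq, (summable_sq (shift x)).tsum_eq_zero_add]
  simp

theorem norm_shift (x : L2) : ‖shift x‖ = ‖x‖ :=
  (sq_eq_sq₀ (norm_nonneg _) (norm_nonneg _)).1 (norm_shift_sq x)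

theorem shift_sub (x y : L2) : shift (x - y) = shift x - shift y := by
  ext i
  cases i <;> simp

/-- The damping operator `xᵢ ↦ 2⁻ⁱ xᵢ`. -/
def damp (x : L2) : L2 :=
  mk (fun i => (1 / 2) ^ i * x i) (by
    refine (summable_sq x).of_nonneg_of_le (fun i => sq_nonneg _) fun i => ?_
    rw [mul_pow]
    refine mul_le_of_le_one_left (sq_nonneg _) ?_
    exact pow_le_one₀ (by positivity) (pow_le_one₀ (by norm_num) (by norm_num)))

@[simp] theorem damp_apply (x : L2) (i : ℕ) : damp x i = (1 / 2) ^ i * x i := rfl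

theorem damp_sub (x y : L2) : damp (x - y) = damp x - damp y := by
  ext i
  simp [mul_sub]

theorem damp_smul (c : ℝ) (x : L2) : damp (c • x) = c • damp x := by
  ext i
  simp [mul_left_comm]

theorem norm_damp_le (x : L2) : ‖damp x‖ ≤ ‖x‖ := by
  have h : ‖damp x‖ ^ 2 ≤ ‖x‖ ^ 2 + ‖(0 : L2)‖ ^ 2 := norm_sq_le_add fun i => by
    have : ((1 / 2 : ℝ) ^ i) ^ 2 ≤ 1 :=
      pow_le_one₀ (by positivity) (pow_le_one₀ (by norm_num) (by norm_num))
    simp only [damp_apply, mul_pow, lp.coeFn_zero, Pi.zero_apply]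
    nlinarith [sq_nonneg (x i)]
  exact abs_le_of_sq_le_sq' (by simpa using h) (norm_nonneg _) |>.2

theorem abs_norm_damp_sub_le (x y : L2) : |‖damp x‖ - ‖damp y‖| ≤ ‖x - y‖ :=
  (abs_norm_sub_norm_le _ _).trans (by rw [← damp_sub]; exact norm_damp_le _)

theorem damp_shift (x : L2) : damp (shift x) = (1 / 2 : ℝ) • shift (damp x) := by
  ext i
  cases i <;> simp [pow_succ]; ring

theorem damp_eq_zero {x : L2} (h : damp x = 0) : x = 0 := by
  ext i
  have := congrArg (fun z : L2 => z i) h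
  simpa using this

theorem norm_damp_hyp_sq (u v : L2) : ‖damp (hyp u v)‖ ^ 2 = ‖damp u‖ ^ 2 + ‖damp v‖ ^ 2 :=
  norm_sq_eq_add fun i => by
    simp only [damp_apply, mul_pow, hyp_apply_sq]
    ring

/-- The positive part of the unit sphere: unit vectors with nonnegative coordinates. -/
def K : Set L2 := {x | (∀ i, 0 ≤ x i) ∧ ‖x‖ = 1}

theorem norm_damp_pos {x : L2} (hx : x ∈ K) : 0 < ‖damp x‖ := by
  rw [norm_pos_iff]
  intro h
  have := hx.2
  rw [damp_eq_zero h] at this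
  simp at this

theorem norm_damp_le_one {x : L2} (hx : x ∈ K) : ‖damp x‖ ≤ 1 :=
  (norm_damp_le x).trans hx.2.le

/-! ### The flow on the positive part of the sphere -/

/-- The amplitude `s` of the transport: a fraction `s²` of the mass moves. -/
def speed (x : L2) : ℝ := ‖damp x‖ / 2

/-- The amplitude `c = √(1 - s²)` of the mass that stays. -/
def stay (x : L2) : ℝ := √(1 - speed x ^ 2)

/-- One step of the transport: a fraction `s²` of the mass of each coordinate moves to its right
neighbour. -/
def flow (x : L2) : L2 := hyp (stay x • x) (speed x • shift x)

theorem speed_nonneg (x : L2) : 0 ≤ speed x := by unfold speed; positivity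

theorem speed_le {x : L2} (hx : x ∈ K) : speed x ≤ 1 / 2 := by
  have := norm_damp_le_one hx
  unfold speed; linarith

theorem stay_nonneg (x : L2) : 0 ≤ stay x := Real.sqrt_nonneg _

theorem stay_sq {x : L2} (hx : x ∈ K) : stay x ^ 2 = 1 - speed x ^ 2 :=
  Real.sq_sqrt (by nlinarith [speed_le hx, speed_nonneg x])

theorem stay_le_one (x : L2) : stay x ≤ 1 :=
  Real.sqrt_le_one.2 (by nlinarith [sq_nonneg (speed x)])

theorem one_sub_speed_le_stay {x : L2} (hx : x ∈ K) : 1 - speed x ≤ stay x :=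
  Real.le_sqrt_of_sq_le (by nlinarith [speed_le hx, speed_nonneg x])

theorem flow_mem {x : L2} (hx : x ∈ K) : flow x ∈ K := by
  refine ⟨fun i => hyp_nonneg _ _ i, ?_⟩
  have h : ‖flow x‖ ^ 2 = 1 := by
    rw [flow, norm_hyp_sq, norm_smul, norm_smul, mul_pow, mul_pow, norm_shift, hx.2]
    simp [stay_sq hx]
  exact (pow_eq_one_iff_of_nonneg (norm_nonneg _) two_ne_zero).1 h

/-- One step of the flow replaces `Λ = ‖D x‖²` by `Λ (1 - 3 Λ / 16)`. -/
theorem norm_damp_flow_sq {x : L2} (hx : x ∈ K) :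
    ‖damp (flow x)‖ ^ 2 = ‖damp x‖ ^ 2 * (1 - 3 / 16 * ‖damp x‖ ^ 2) := by
  rw [flow, norm_damp_hyp_sq, damp_smul, damp_smul, damp_shift]
  simp only [norm_smul, mul_pow, norm_shift, Real.norm_eq_abs, sq_abs]
  rw [stay_sq hx, speed]
  ring

theorem norm_flow_sub_le {x : L2} (hx : x ∈ K) : ‖flow x - x‖ ≤ ‖damp x‖ := by
  have h := norm_hyp_sub_le (stay x • x) (speed x • shift x) x 0
  rw [hyp_zero hx.1] at h
  have h1 : ‖stay x • x - x‖ = 1 - stay x := by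
    rw [show stay x • x - x = (stay x - 1) • x by rw [sub_smul, one_smul], norm_smul, hx.2,
      Real.norm_eq_abs, abs_of_nonpos (by linarith [stay_le_one x])]
    ring
  have h2 : ‖speed x • shift x - 0‖ = speed x := by
    rw [sub_zero, norm_smul, norm_shift, hx.2, Real.norm_eq_abs, abs_of_nonneg (speed_nonneg x),
      mul_one]
  rw [h1, h2] at h
  have h3 := one_sub_speed_le_stay hx
  have h4 : 2 * speed x = ‖damp x‖ := by unfold speed; ring
  exact h.trans (by linarith)

theorem abs_speed_sub_le (x y : L2) : |speed x - speed y| ≤ ‖x - y‖ := by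
  have h := abs_norm_damp_sub_le x y
  have h2 : speed x - speed y = (‖damp x‖ - ‖damp y‖) / 2 := by unfold speed; ring
  rw [h2, abs_div, abs_two]
  linarith [abs_nonneg (‖damp x‖ - ‖damp y‖)]

theorem abs_stay_sub_le {x y : L2} (hx : x ∈ K) (hy : y ∈ K) :
    |stay x - stay y| ≤ |speed x - speed y| := by
  have h : (stay x - stay y) * (stay x + stay y) = -((speed x - speed y) * (speed x + speed y)) := by
    linear_combination stay_sq hx - stay_sq hy
  have h' := congrArg abs h
  rw [abs_neg, abs_mul, abs_mul, abs_of_nonneg (add_nonneg (stay_nonneg x) (stay_nonneg y)),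
    abs_of_nonneg (add_nonneg (speed_nonneg x) (speed_nonneg y))] at h'
  have h1 := one_sub_speed_le_stay hx
  have h2 := one_sub_speed_le_stay hy
  have h3 := speed_le hx
  have h4 := speed_le hy
  have h5 := abs_nonneg (stay x - stay y)
  have h6 := abs_nonneg (speed x - speed y)
  nlinarith

theorem norm_smul_sub_smul_le (a b : ℝ) (u v : L2) :
    ‖a • u - b • v‖ ≤ |a| * ‖u - v‖ + |a - b| * ‖v‖ := by
  have : a • u - b • v = a • (u - v) + (a - b) • v := by
    rw [smul_sub, sub_smul]; abel
  rw [this]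
  refine (norm_add_le _ _).trans ?_
  rw [norm_smul, norm_smul, Real.norm_eq_abs, Real.norm_eq_abs]

theorem norm_flow_sub_flow_le {x y : L2} (hx : x ∈ K) (hy : y ∈ K) :
    ‖flow x - flow y‖ ≤ 4 * ‖x - y‖ := by
  have h := norm_hyp_sub_le (stay x • x) (speed x • shift x) (stay y • y) (speed y • shift y)
  have h1 := norm_smul_sub_smul_le (stay x) (stay y) x y
  have h2 := norm_smul_sub_smul_le (speed x) (speed y) (shift x) (shift y)
  rw [← shift_sub, norm_shift, norm_shift, abs_of_nonneg (speed_nonneg x), hy.2] at h2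
  rw [abs_of_nonneg (stay_nonneg x), hy.2] at h1
  have h3 := abs_stay_sub_le hx hy
  have h4 := abs_speed_sub_le x y
  have h5 := mul_le_mul_of_nonneg_right (stay_le_one x) (norm_nonneg (x - y))
  have h6 := mul_le_mul_of_nonneg_right (speed_le hx) (norm_nonneg (x - y))
  change ‖flow x - flow y‖ ≤ _ at h
  linarith [norm_nonneg (x - y)]

theorem iterate_flow_mem {x : L2} (hx : x ∈ K) (n : ℕ) : flow^[n] x ∈ K := by
  induction n with
  | zero => exact hx
  | succ n ih => rw [Function.iterate_succ_apply']; exact flow_mem ih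

/-- The decay `Λ = O(1 / n)` along the flow, uniform in the starting point. -/
theorem norm_damp_iterate_sq {x : L2} (hx : x ∈ K) (n : ℕ) :
    ‖damp (flow^[n] x)‖ ^ 2 * (1 + 3 / 16 * n) ≤ 1 := by
  induction n with
  | zero =>
    have := norm_damp_le_one hx
    have := norm_nonneg (damp x)
    simp only [Function.iterate_zero, id, Nat.cast_zero]
    nlinarith
  | succ n ih =>
    have hm := iterate_flow_mem hx n
    have h1 := norm_damp_le_one hm
    have h0 := norm_nonneg (damp (flow^[n] x))
    rw [Function.iterate_succ_apply', norm_damp_flow_sq hm]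
    push_cast
    set a := ‖damp (flow^[n] x)‖ ^ 2
    have ha : a ≤ 1 := by
      simp only [a]
      nlinarith
    have hp : 0 ≤ 1 - 3 / 16 * a := by linarith
    nlinarith [mul_le_mul_of_nonneg_right ih hp, sq_nonneg a]

/-! ### The retraction of the ball onto the positive part of the sphere -/

/-- The first basis vector. -/
def e0 : L2 := lp.single 2 0 1

theorem norm_e0 : ‖e0‖ = 1 := by
  rw [e0, lp.norm_single (by norm_num)]
  simp

/-- The vector with coordinates `|xᵢ|`, with the missing norm `1 - ‖x‖` put at coordinate `0`. -/
def lift (x : L2) : L2 := hyp x ((1 - ‖x‖) • e0)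

theorem half_le_norm_lift (x : L2) : 1 / 2 ≤ ‖lift x‖ := by
  have h : ‖lift x‖ ^ 2 = ‖x‖ ^ 2 + (1 - ‖x‖) ^ 2 := by
    rw [lift, norm_hyp_sq, norm_smul, norm_e0, mul_one, Real.norm_eq_abs, sq_abs]
  refine abs_le_of_sq_le_sq' ?_ (norm_nonneg _) |>.2
  rw [h]
  nlinarith [sq_nonneg (‖x‖ - 1 / 2)]

theorem norm_lift_sub_le (x y : L2) : ‖lift x - lift y‖ ≤ 2 * ‖x - y‖ := by
  have h := norm_hyp_sub_le x ((1 - ‖x‖) • e0) y ((1 - ‖y‖) • e0)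
  rw [← sub_smul, norm_smul, norm_e0, mul_one, Real.norm_eq_abs,
    show 1 - ‖x‖ - (1 - ‖y‖) = -(‖x‖ - ‖y‖) by ring, abs_neg] at h
  have := abs_norm_sub_norm_le x y
  exact h.trans (by linarith)

/-- The retraction onto `K`, obtained by normalizing `lift x`. It is defined and Lipschitz on the
whole space. -/
def toK (x : L2) : L2 := ‖lift x‖⁻¹ • lift x

theorem toK_mem (x : L2) : toK x ∈ K := by
  have h := half_le_norm_lift x
  refine ⟨fun i => ?_, ?_⟩
  · exact mul_nonneg (by positivity) (hyp_nonneg _ _ i)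
  · rw [toK, norm_smul, norm_inv, norm_norm, inv_mul_cancel₀ (by linarith)]

theorem toK_of_mem {x : L2} (hx : x ∈ K) : toK x = x := by
  have : lift x = x := by rw [lift, hx.2, sub_self, zero_smul, hyp_zero hx.1]
  rw [toK, this, hx.2, inv_one, one_smul]

theorem norm_toK_sub_le (x y : L2) : ‖toK x - toK y‖ ≤ 8 * ‖x - y‖ := by
  have hx := half_le_norm_lift x
  have hy := half_le_norm_lift y
  have h := norm_smul_sub_smul_le ‖lift x‖⁻¹ ‖lift y‖⁻¹ (lift x) (lift y)
  have hinv : ‖lift x‖⁻¹ ≤ 2 := by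
    rw [inv_le_comm₀ (by linarith) (by norm_num)]; linarith
  have h0 : 0 ≤ ‖lift x‖⁻¹ := by positivity
  -- `|1/a - 1/b| b = |a - b| / a`, so only a lower bound on `a` is needed
  have h1 : |‖lift x‖⁻¹ - ‖lift y‖⁻¹| * ‖lift y‖ = ‖lift x‖⁻¹ * |‖lift y‖ - ‖lift x‖| := by
    rw [← abs_of_nonneg h0, ← abs_mul, abs_of_nonneg h0]
    conv_lhs => rw [← abs_of_nonneg (norm_nonneg (lift y)), ← abs_mul]
    congr 1
    rw [abs_of_nonneg (norm_nonneg _)]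
    field_simp
  have h2 : |‖lift y‖ - ‖lift x‖| ≤ ‖lift x - lift y‖ := by
    rw [abs_sub_comm]; exact abs_norm_sub_norm_le _ _
  rw [h1, abs_of_nonneg h0] at h
  have h3 := mul_le_mul_of_nonneg_left h2 h0
  have h4 := mul_le_mul_of_nonneg_right hinv (norm_nonneg (lift x - lift y))
  have h5 := norm_lift_sub_le x y
  change ‖toK x - toK y‖ ≤ _ at h
  linarith

end L2

/-! ### Transfer to the Hilbert space -/

theorem exists_l2_isometry {H : Type*} [NormedAddCommGroup H] [InnerProductSpace ℝ H]
    [CompleteSpace H] (hinf : ¬ FiniteDimensional ℝ H) : Nonempty (L2 →ₗᵢ[ℝ] H) := by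
  let b := Module.Basis.ofVectorSpace ℝ H
  have : Infinite (Module.Basis.ofVectorSpaceIndex ℝ H) := by
    by_contra hfin
    rw [not_infinite_iff_finite] at hfin
    exact hinf (Module.Finite.of_basis b)
  have hli := b.linearIndependent.comp _ (Infinite.natEmbedding _).injective
  exact ⟨(InnerProductSpace.gramSchmidtNormed_orthonormal hli).orthogonalFamily.linearIsometry⟩

end

open L2 in
/-- Let `H` be an infinite-dimensional real Hilbert space.  Then there
exists a fixed-point-free map `T : B_H → B_H` that is Lipschitz and uniformly asymptotically
regular. -/
theorem statement15 {H : Type*} [NormedAddCommGroup H] [InnerProductSpace ℝ H]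
    [CompleteSpace H] (hinf : ¬ FiniteDimensional ℝ H) :
    ∃ T : H → H,
      Set.MapsTo T (Metric.closedBall (0 : H) 1) (Metric.closedBall (0 : H) 1) ∧
      (∀ y ∈ Metric.closedBall (0 : H) 1, T y ≠ y) ∧
      (∃ L : ℝ, 0 ≤ L ∧ ∀ y ∈ Metric.closedBall (0 : H) 1,
        ∀ z ∈ Metric.closedBall (0 : H) 1, ‖T y - T z‖ ≤ L * ‖y - z‖) ∧
      (∀ ε : ℝ, 0 < ε → ∃ N : ℕ, ∀ n : ℕ, N ≤ n →
        ∀ y ∈ Metric.closedBall (0 : H) 1, ‖T^[n + 1] y - T^[n] y‖ < ε) := by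
  obtain ⟨V⟩ := exists_l2_isometry hinf
  let P : H →L[ℝ] L2 := V.toContinuousLinearMap.adjoint
  have hPV : ∀ x, P (V x) = x := fun x => by
    have := V.adjoint_comp_self
    exact congrArg (fun f : L2 →L[ℝ] L2 => f x) this
  have hP : ∀ x, ‖P x‖ ≤ ‖x‖ := fun x => by
    have h1 : ‖P‖ ≤ 1 := by
      rw [show ‖P‖ = ‖V.toContinuousLinearMap‖ from LinearIsometryEquiv.norm_map _ _]
      exact V.norm_toContinuousLinearMap_le
    exact (P.le_of_opNorm_le h1 x).trans (one_mul _).le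
  let T : H → H := fun y => V (flow (toK (P y)))
  have hiter : ∀ n y, T^[n + 1] y = V (flow^[n + 1] (toK (P y))) := by
    intro n y
    induction n with
    | zero => rfl
    | succ n ih =>
      rw [Function.iterate_succ_apply', ih, Function.iterate_succ_apply' flow (n + 1)]
      simp only [T]
      rw [hPV, toK_of_mem (iterate_flow_mem (toK_mem _) _)]
  refine ⟨T, fun y _ => ?_, fun y _ hy => ?_, ⟨32, by norm_num, fun y _ z _ => ?_⟩, fun ε hε => ?_⟩
  · rw [mem_closedBall_zero_iff, V.norm_map, (flow_mem (toK_mem _)).2]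
  · -- a fixed point of `T` gives a fixed point of `flow` in `K`, where `flow` decreases `‖D x‖`
    have hfix : flow (toK (P y)) = P y := by
      have := congrArg P hy
      rwa [show P (T y) = flow (toK (P y)) from hPV _] at this
    have hK : P y ∈ K := hfix ▸ flow_mem (toK_mem _)
    rw [toK_of_mem hK] at hfix
    have h := norm_damp_flow_sq hK
    rw [hfix] at h
    have hpos : 0 < ‖damp (P y)‖ ^ 2 := pow_pos (norm_damp_pos hK) 2
    nlinarith [mul_pos hpos hpos]
  · have h : ‖T y - T z‖ = ‖flow (toK (P y)) - flow (toK (P z))‖ := by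
      rw [← V.map_sub, V.norm_map]
    have h1 := norm_flow_sub_flow_le (toK_mem (P y)) (toK_mem (P z))
    have h2 := norm_toK_sub_le (P y) (P z)
    have h3 := hP (y - z)
    rw [map_sub] at h3
    linarith
  · obtain ⟨N, hN⟩ := exists_nat_gt (16 / (3 * ε ^ 2))
    refine ⟨N + 1, fun n hn y _ => ?_⟩
    obtain ⟨k, rfl⟩ : ∃ k, n = k + 1 := ⟨n - 1, by omega⟩
    rw [hiter, hiter, ← V.map_sub, V.norm_map, Function.iterate_succ_apply' flow (k + 1)]
    refine (norm_flow_sub_le (iterate_flow_mem (toK_mem _) _)).trans_lt ?_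
    have h := norm_damp_iterate_sq (toK_mem (P y)) (k + 1)
    have hNk : (N : ℝ) ≤ (k + 1 : ℕ) := by exact_mod_cast hn.trans' (by omega)
    rw [div_lt_iff₀ (by positivity)] at hN
    by_contra! hge
    have hsq : ε ^ 2 ≤ ‖damp (flow^[k + 1] (toK (P y)))‖ ^ 2 := by gcongr
    have h1 := mul_le_mul_of_nonneg_right hNk (by positivity : 0 ≤ 3 * ε ^ 2)
    have h2 := mul_le_mul_of_nonneg_right hsq
      (by positivity : (0 : ℝ) ≤ 1 + 3 / 16 * (k + 1 : ℕ))
    nlinarith [pow_pos hε 2]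
end

section
/- Let 1 < p < ∞ and let L_p denote the Lebesgue space L_p([0,1]) of real-valued functions with Lebesgue measure. Then: (i) there exists a fixed-point-free map T : B_{L_p} → B_{L_p} that is Lipschitz and uniformly asymptotically regular; (ii) for every α ∈ (0,1) and every λ > 0 there exists a fixed-point-free α-Hölder λ-Lipschitz map T : B_{L_p} → B_{L_p} with d(T,B_{L_p}) = 0. -/
open Metric Set Filter Topology MeasureTheory
open scoped ENNReal

/-!
The map of the first part is a composition `T = S ∘ R`.

* `R` (`retract`) is the normalization of `|x| + (1 - ‖x‖)⁺ · 1`. It is a Lipschitz retraction of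
  `L_p` onto the positive part `K` of the unit sphere.
* `S` (`spread`) is the power mean `((|x|^p + |U x|^p) / 2)^(1/p)`, where `U` is the dilation isometry
  `U x (t) = 2^(1/p) x(2t)` for `t ≤ 1/2` and `0` otherwise. It is Lipschitz, because a power mean
  is a multiple of an `ℓ_p` norm on `ℝ²`, and it preserves norms.

The Mazur map `x ↦ |x|^p` carries `S` to the linear operator `Q = (1 + P) / 2` on `L_1`
(`mazur_spread`), where `P f (t) = 2 f(2t)` on `t ≤ 1/2` and `0` otherwise is an isometry of `L_1`.
A fixed point of `T` is a fixed point of `S` in `K`, so its image in `L_1` is fixed by `P`; but a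
function fixed by `P` lives on `[0, 2⁻ⁿ]` for every `n` and vanishes (`eq_zero_of_spread_eq`).
Moreover `‖Qⁿ (P - 1)‖ ≤ 2 / √(n + 1)` for every element `P` with powers of norm at most one
(`norm_lazy_le`, a consequence of the variance of the binomial distribution). Since
`|a - b|^p ≤ |a^p - b^p|` for nonnegative numbers, `‖S^(n+1) z - S^n z‖^p ≤ 1 / √(n + 1)` on `K`.

For the second part, `T` is defined and Lipschitz on all of `L_p`, so `x ↦ r T (x / r)` is again
Lipschitz with the same constant and takes values of norm `r`. For `r` small, interpolation makes
the `α`-Hölder constant at most `λ`; the rescaled orbits of `T` show that the minimal displacement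
is zero.
-/

/-! ### Averages of power-bounded operators, and normalization -/

/-- The variance of a symmetric binomial variable: the Bernstein variance identity at `1 / 2`. -/
theorem sum_choose_mul_sq (m : ℕ) :
    ∑ k ∈ Finset.range (m + 1), (m.choose k : ℝ) * (2 * (k : ℝ) - (m : ℝ)) ^ 2 = (m : ℝ) * 2 ^ m := by
  have h := congrArg (Polynomial.eval (1 / 2 : ℝ)) (bernsteinPolynomial.variance ℝ m)
  simp only [Polynomial.eval_finsetSum, bernsteinPolynomial, Polynomial.eval_mul,
    Polynomial.eval_pow, Polynomial.eval_sub, Polynomial.eval_X,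
    Polynomial.eval_natCast, Polynomial.eval_one, nsmul_eq_mul] at h
  have h2 : ∀ k ∈ Finset.range (m + 1), ((m : ℝ) * (1 / 2) - k) ^ 2 *
      ((m.choose k : ℝ) * (1 / 2) ^ k * (1 - 1 / 2) ^ (m - k))
      = (1 / 4) * (1 / 2) ^ m * ((m.choose k : ℝ) * (2 * (k : ℝ) - m) ^ 2) := by
    intro k hk
    have hk' : k + (m - k) = m := by have := Finset.mem_range.1 hk; omega
    have : (1 / 2 : ℝ) ^ k * (1 / 2) ^ (m - k) = (1 / 2) ^ m := by rw [← pow_add, hk']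
    rw [← this]; norm_num; ring
  rw [Finset.sum_congr rfl h2, ← Finset.mul_sum] at h
  have h3 : (1 / 2 : ℝ) ^ m * 2 ^ m = 1 := by rw [← mul_pow]; norm_num
  generalize ∑ k ∈ Finset.range (m + 1), (m.choose k : ℝ) * (2 * (k : ℝ) - (m : ℝ)) ^ 2 = s at *
  linear_combination 4 * 2 ^ m * h - h3 * s

/-- The first absolute moment of a centred symmetric binomial variable, bounded by
Cauchy–Schwarz. -/
theorem sum_choose_mul_abs_le (m : ℕ) :
    ∑ k ∈ Finset.range (m + 1), (m.choose k : ℝ) * |2 * (k : ℝ) - m| ≤ 2 ^ m * √m := by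
  have h := Finset.sum_mul_sq_le_sq_mul_sq (Finset.range (m + 1))
    (fun k => √(m.choose k : ℝ)) (fun k => √(m.choose k : ℝ) * |2 * (k : ℝ) - m|)
  simp only [mul_pow, sq_abs, Real.sq_sqrt (Nat.cast_nonneg _), sum_choose_mul_sq, ← mul_assoc,
    Real.mul_self_sqrt (Nat.cast_nonneg _)] at h
  have h1 : ∑ k ∈ Finset.range (m + 1), (m.choose k : ℝ) = 2 ^ m := by
    exact_mod_cast Nat.sum_range_choose m
  rw [h1] at h
  refine abs_le_of_sq_le_sq' ?_ (by positivity) |>.2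
  rw [mul_pow, Real.sq_sqrt (Nat.cast_nonneg _)]
  nlinarith

/-- With `m = n + 1`, this is `m (1 + P)^n (P - 1) = 2 · m P (1 + P)^n - m (1 + P)^m`: the first term
on the right is twice the formal derivative of `(1 + P)^m` multiplied by `P`. -/
theorem mul_lazy_eq {A : Type*} [Ring A] [Algebra ℝ A] (P : A) (n : ℕ) :
    ((n + 1 : ℕ) : ℝ) • ((1 + P) ^ n * (P - 1)) =
      ∑ k ∈ Finset.range (n + 1 + 1),
        (((n + 1).choose k : ℝ) * (2 * k - (n + 1 : ℕ))) • P ^ k := by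
  have hpow : ∀ m : ℕ, (1 + P) ^ m = ∑ k ∈ Finset.range (m + 1), (m.choose k : ℝ) • P ^ k := by
    intro m
    rw [add_comm, (Commute.one_right P).add_pow]
    refine Finset.sum_congr rfl fun k _ => ?_
    rw [one_pow, mul_one, ← (Nat.cast_commute _ _).eq, Nat.cast_smul_eq_nsmul, nsmul_eq_mul]
  have hder : ∑ k ∈ Finset.range (n + 1 + 1), (((n + 1).choose k : ℝ) * k) • P ^ k
      = ((n + 1 : ℕ) : ℝ) • ((1 + P) ^ n * P) := by
    rw [Finset.sum_range_succ', hpow n, Finset.sum_mul, Finset.smul_sum]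
    simp only [Nat.cast_zero, mul_zero, zero_smul, add_zero]
    refine Finset.sum_congr rfl fun k _ => ?_
    rw [smul_mul_assoc, ← pow_succ, smul_smul]
    congr 1
    exact_mod_cast (Nat.add_one_mul_choose_eq n k).symm
  have : ∀ k : ℕ, (((n + 1).choose k : ℝ) * (2 * k - (n + 1 : ℕ))) • P ^ k
      = (2 : ℝ) • ((((n + 1).choose k : ℝ) * k) • P ^ k)
        - ((n + 1 : ℕ) : ℝ) • (((n + 1).choose k : ℝ) • P ^ k) := by
    intro k
    rw [smul_smul, smul_smul, ← sub_smul]; congr 1; ring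
  simp only [this, Finset.sum_sub_distrib, ← Finset.smul_sum, hder, ← hpow, pow_succ]
  rw [smul_comm, ← smul_sub]
  congr 1
  rw [two_smul]; noncomm_ring

/-- Quantitative asymptotic regularity of the averaged operator `(1 + P) / 2` of a power-bounded
element `P`. -/
theorem norm_lazy_le {A : Type*} [NormedRing A] [NormedAlgebra ℝ A] (P : A)
    (hP : ∀ k, ‖P ^ k‖ ≤ 1) (n : ℕ) :
    ‖((1 / 2 : ℝ) • (1 + P)) ^ n * (P - 1)‖ ≤ 2 / √((n + 1 : ℕ) : ℝ) := by
  have hm : (0 : ℝ) < ((n + 1 : ℕ) : ℝ) := by positivity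
  have h1 : ((n + 1 : ℕ) : ℝ) * ‖(1 + P) ^ n * (P - 1)‖ ≤ 2 ^ (n + 1) * √((n + 1 : ℕ) : ℝ) := by
    rw [← abs_of_pos hm, ← Real.norm_eq_abs, ← norm_smul, mul_lazy_eq, Real.norm_eq_abs,
      abs_of_pos hm]
    refine (norm_sum_le _ _).trans ((Finset.sum_le_sum fun k _ => ?_).trans
      (sum_choose_mul_abs_le (n + 1)))
    rw [norm_smul, Real.norm_eq_abs, abs_mul, abs_of_nonneg (Nat.cast_nonneg _)]
    exact mul_le_of_le_one_right (by positivity) (hP k)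
  rw [smul_pow, smul_mul_assoc, norm_smul, Real.norm_eq_abs, abs_of_pos (by positivity),
    le_div_iff₀ (by positivity)]
  have hs : √((n + 1 : ℕ) : ℝ) * √((n + 1 : ℕ) : ℝ) = ((n + 1 : ℕ) : ℝ) :=
    Real.mul_self_sqrt hm.le
  have hs0 : 0 < √((n + 1 : ℕ) : ℝ) := by positivity
  have h3 : (1 / 2 : ℝ) ^ n * 2 ^ (n + 1) = 2 := by
    rw [pow_succ, ← mul_assoc, ← mul_pow]; norm_num
  generalize √((n + 1 : ℕ) : ℝ) = s at *
  rw [← hs] at h1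
  have h4 : s * ‖(1 + P) ^ n * (P - 1)‖ ≤ 2 ^ (n + 1) := by
    by_contra! h
    nlinarith
  calc _ = (1 / 2 : ℝ) ^ n * (s * ‖(1 + P) ^ n * (P - 1)‖) := by ring
    _ ≤ (1 / 2 : ℝ) ^ n * 2 ^ (n + 1) := by gcongr
    _ = 2 := h3

/-- Normalization is Lipschitz away from the origin. -/
theorem norm_normalize_sub_le {X : Type*} [NormedAddCommGroup X] [NormedSpace ℝ X] {u v : X}
    (hu : 1 / 2 ≤ ‖u‖) (hv : 1 / 2 ≤ ‖v‖) : ‖‖u‖⁻¹ • u - ‖v‖⁻¹ • v‖ ≤ 4 * ‖u - v‖ := by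
  have hu0 : 0 < ‖u‖ := by linarith
  have hv0 : 0 < ‖v‖ := by linarith
  have e : ‖u‖⁻¹ • u - ‖v‖⁻¹ • v = ‖u‖⁻¹ • (u - v) + (‖u‖⁻¹ * (‖v‖ - ‖u‖) * ‖v‖⁻¹) • v := by
    have : ‖u‖⁻¹ * (‖v‖ - ‖u‖) * ‖v‖⁻¹ = ‖u‖⁻¹ - ‖v‖⁻¹ := by field_simp
    rw [this]; module
  have hi : ‖u‖⁻¹ ≤ 2 := by rw [inv_le_comm₀ hu0 two_pos]; linarith
  have h1 : ‖‖u‖⁻¹ • (u - v)‖ = ‖u‖⁻¹ * ‖u - v‖ := by simp [norm_smul]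
  have h2 : ‖(‖u‖⁻¹ * (‖v‖ - ‖u‖) * ‖v‖⁻¹) • v‖ = ‖u‖⁻¹ * |‖v‖ - ‖u‖| := by
    simp [norm_smul, mul_assoc, hv0.ne']
  have h3 := abs_norm_sub_norm_le v u
  rw [norm_sub_rev] at h3
  rw [e]
  refine (norm_add_le _ _).trans ?_
  rw [h1, h2]
  have := norm_nonneg (u - v)
  have : ‖u‖⁻¹ * |‖v‖ - ‖u‖| ≤ 2 * ‖u - v‖ := by gcongr
  have : ‖u‖⁻¹ * ‖u - v‖ ≤ 2 * ‖u - v‖ := by gcongr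
  linarith

/-! ### The dilation isometry -/

/-- Lebesgue measure on `[0, 1]`. -/
noncomputable abbrev muI : Measure ℝ := (volume : Measure ℝ).restrict (Set.Icc (0 : ℝ) 1)

/-- Doubling maps `[0, 1/2]`, with its measure doubled, onto `[0, 1]`. -/
theorem measurePreserving_two_mul :
    MeasurePreserving (fun t : ℝ => 2 * t) ((2 : ℝ≥0∞) • muI.restrict (Set.Iic (1 / 2))) muI := by
  refine ⟨by fun_prop, ?_⟩
  have h := Real.smul_map_volume_mul_left (a := 2) two_ne_zero
  have hs : (fun t : ℝ => 2 * t) ⁻¹' Set.Icc 0 1 = Set.Iic (1 / 2) ∩ Set.Icc 0 1 := by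
    ext t; simp only [mem_preimage, mem_Icc, mem_inter_iff, mem_Iic]
    constructor
    · rintro ⟨h1, h2⟩; refine ⟨?_, ?_, ?_⟩ <;> linarith
    · rintro ⟨h1, h2, h3⟩; constructor <;> linarith
  conv_rhs => rw [muI, ← h, Measure.restrict_smul,
    Measure.restrict_map (by fun_prop) measurableSet_Icc, hs]
  rw [Measure.map_smul, muI, Measure.restrict_restrict measurableSet_Iic]
  norm_num

variable {q : ℝ≥0∞}

/-- The function `t ↦ 2 ^ (1 / q) * f (2 t)` on `t ≤ 1 / 2`, extended by zero: `f` squeezed onto the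
left half of `[0, 1]`, normalized so as to keep the `L_q` norm. -/
noncomputable def dilFun (q : ℝ≥0∞) (f : ℝ → ℝ) : ℝ → ℝ :=
  (Set.Iic (1 / 2 : ℝ)).indicator (fun t => (2 : ℝ) ^ (1 / q.toReal) * f (2 * t))

theorem ae_comp_two_mul {Q : ℝ → Prop} (h : ∀ᵐ t ∂muI, Q t) :
    ∀ᵐ t ∂muI, t ∈ Set.Iic (1 / 2 : ℝ) → Q (2 * t) := by
  have h1 := measurePreserving_two_mul.quasiMeasurePreserving.ae h
  exact (ae_restrict_iff' measurableSet_Iic).1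
    ((Measure.absolutelyContinuous_smul two_ne_zero).ae_le h1)

theorem aestronglyMeasurable_dilFun {f : ℝ → ℝ} (hf : AEStronglyMeasurable f muI) :
    AEStronglyMeasurable (dilFun q f) muI := by
  refine (aestronglyMeasurable_indicator_iff measurableSet_Iic).2 (AEStronglyMeasurable.const_mul ?_ _)
  exact (hf.comp_measurePreserving measurePreserving_two_mul).mono_ac
    (Measure.absolutelyContinuous_smul two_ne_zero)

theorem eLpNorm_dilFun (hq0 : q ≠ 0) (hqt : q ≠ ⊤) {f : ℝ → ℝ}
    (hf : AEStronglyMeasurable f muI) : eLpNorm (dilFun q f) q muI = eLpNorm f q muI := by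
  have hq : 0 < q.toReal := ENNReal.toReal_pos hq0 hqt
  have e : (fun t => (2 : ℝ) ^ (1 / q.toReal) * f (2 * t))
      = (2 : ℝ) ^ (1 / q.toReal) • (f ∘ fun t => 2 * t) := by ext t; simp
  rw [← eLpNorm_comp_measurePreserving hf measurePreserving_two_mul,
    eLpNorm_smul_measure_of_ne_top hqt, dilFun,
    eLpNorm_indicator_eq_eLpNorm_restrict measurableSet_Iic, e, eLpNorm_const_smul]
  congr 1
  rw [Real.enorm_eq_ofReal (by positivity), ← ENNReal.ofReal_rpow_of_pos two_pos]
  simp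

theorem memLp_dilFun (hq0 : q ≠ 0) (hqt : q ≠ ⊤) {f : ℝ → ℝ} (hf : MemLp f q muI) :
    MemLp (dilFun q f) q muI :=
  ⟨aestronglyMeasurable_dilFun hf.1, by rw [eLpNorm_dilFun hq0 hqt hf.1]; exact hf.2⟩

/-- The dilation isometry of `L_q([0, 1])` induced by `dilFun`. For `q = 1` it moves the mass of a
density from `t` to `t / 2`. -/
noncomputable def dil (q : ℝ≥0∞) [hq1 : Fact (1 ≤ q)] (hqt : q ≠ ⊤) :
    Lp ℝ q muI →ₗᵢ[ℝ] Lp ℝ q muI where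
  toFun x := (memLp_dilFun (one_pos.trans_le hq1.out).ne' hqt (Lp.memLp x)).toLp
  map_add' x y := by
    ext1
    filter_upwards [MemLp.coeFn_toLp (memLp_dilFun (one_pos.trans_le hq1.out).ne' hqt (Lp.memLp x)),
      MemLp.coeFn_toLp (memLp_dilFun (one_pos.trans_le hq1.out).ne' hqt (Lp.memLp y)),
      MemLp.coeFn_toLp (memLp_dilFun (one_pos.trans_le hq1.out).ne' hqt (Lp.memLp (x + y))),
      Lp.coeFn_add (MemLp.toLp _ (memLp_dilFun (one_pos.trans_le hq1.out).ne' hqt (Lp.memLp x)))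
        (MemLp.toLp _ (memLp_dilFun (one_pos.trans_le hq1.out).ne' hqt (Lp.memLp y))),
      ae_comp_two_mul (Lp.coeFn_add x y)] with t h1 h2 h3 h4 h5
    rw [h3, h4, Pi.add_apply, h1, h2]
    by_cases ht : t ∈ Set.Iic (1 / 2 : ℝ)
    · simp only [dilFun, indicator_of_mem ht, h5 ht, Pi.add_apply]; ring
    · simp only [dilFun, indicator_of_notMem ht, add_zero]
  map_smul' c x := by
    ext1
    filter_upwards [MemLp.coeFn_toLp (memLp_dilFun (one_pos.trans_le hq1.out).ne' hqt (Lp.memLp x)),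
      MemLp.coeFn_toLp (memLp_dilFun (one_pos.trans_le hq1.out).ne' hqt (Lp.memLp (c • x))),
      Lp.coeFn_smul c (MemLp.toLp _ (memLp_dilFun (one_pos.trans_le hq1.out).ne' hqt (Lp.memLp x))),
      ae_comp_two_mul (Lp.coeFn_smul c x)] with t h1 h3 h4 h5
    rw [h3, RingHom.id_apply, h4, Pi.smul_apply, h1]
    by_cases ht : t ∈ Set.Iic (1 / 2 : ℝ)
    · simp only [dilFun, indicator_of_mem ht, h5 ht, Pi.smul_apply, smul_eq_mul]; ring
    · simp only [dilFun, indicator_of_notMem ht, smul_zero]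
  norm_map' x := by
    change ‖(MemLp.toLp _ (memLp_dilFun (one_pos.trans_le hq1.out).ne' hqt (Lp.memLp x)))‖ = ‖x‖
    rw [Lp.norm_toLp, eLpNorm_dilFun (one_pos.trans_le hq1.out).ne' hqt (Lp.aestronglyMeasurable x),
      Lp.norm_def]

theorem coeFn_dil [hq1 : Fact (1 ≤ q)] (hqt : q ≠ ⊤) (x : Lp ℝ q muI) :
    dil q hqt x =ᵐ[muI] dilFun q x :=
  MemLp.coeFn_toLp (memLp_dilFun (one_pos.trans_le hq1.out).ne' hqt (Lp.memLp x))

/-! ### The Mazur map and the averaged dilation -/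

theorem norm_rpow_eq_integral (hq0 : q ≠ 0) (hqt : q ≠ ⊤) (x : Lp ℝ q muI) :
    ‖x‖ ^ q.toReal = ∫ t, ‖x t‖ ^ q.toReal ∂muI := by
  have hi : 0 ≤ ∫ t, ‖x t‖ ^ q.toReal ∂muI := integral_nonneg fun t => by positivity
  rw [Lp.norm_def, (Lp.memLp x).eLpNorm_eq_integral_rpow_norm hq0 hqt,
    ENNReal.toReal_ofReal (by positivity), Real.rpow_inv_rpow hi (ENNReal.toReal_pos hq0 hqt).ne']

theorem memLp_norm_rpow (hq0 : q ≠ 0) (hqt : q ≠ ⊤) (x : Lp ℝ q muI) :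
    MemLp (fun t => ‖x t‖ ^ q.toReal) 1 muI := (Lp.memLp x).norm_rpow hq0 hqt

/-- The map `x ↦ |x| ^ q` from `L_q` to `L_1`: the Mazur map on the positive cone. -/
noncomputable def mazur (hq0 : q ≠ 0) (hqt : q ≠ ⊤) (x : Lp ℝ q muI) : Lp ℝ 1 muI :=
  (memLp_norm_rpow hq0 hqt x).toLp

theorem coeFn_mazur (hq0 : q ≠ 0) (hqt : q ≠ ⊤) (x : Lp ℝ q muI) :
    mazur hq0 hqt x =ᵐ[muI] fun t => ‖x t‖ ^ q.toReal :=
  MemLp.coeFn_toLp (memLp_norm_rpow hq0 hqt x)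

theorem norm_mazur (hq0 : q ≠ 0) (hqt : q ≠ ⊤) (x : Lp ℝ q muI) :
    ‖mazur hq0 hqt x‖ = ‖x‖ ^ q.toReal := by
  rw [L1.norm_eq_integral_norm, norm_rpow_eq_integral hq0 hqt]
  refine integral_congr_ae ?_
  filter_upwards [coeFn_mazur hq0 hqt x] with t ht
  rw [ht, Real.norm_of_nonneg (by positivity)]

theorem abs_sub_rpow_le {a b r : ℝ} (ha : 0 ≤ a) (hb : 0 ≤ b) (hr : 1 ≤ r) :
    |a - b| ^ r ≤ |a ^ r - b ^ r| := by
  wlog h : b ≤ a generalizing a b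
  · rw [abs_sub_comm, abs_sub_comm (a ^ r)]; exact this hb ha (le_of_not_ge h)
  have h1 := Real.add_rpow_le_rpow_add (sub_nonneg.2 h) hb hr
  rw [sub_add_cancel] at h1
  rw [abs_of_nonneg (sub_nonneg.2 h)]
  exact (by linarith : (a - b) ^ r ≤ a ^ r - b ^ r).trans (le_abs_self _)

/-- On the positive cone, distances in `L_q` are controlled by the distances in `L_1` of the images
under the Mazur map. -/
theorem norm_sub_rpow_le [hq1 : Fact (1 ≤ q)] (hq0 : q ≠ 0) (hqt : q ≠ ⊤) {x y : Lp ℝ q muI}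
    (hx : 0 ≤ x) (hy : 0 ≤ y) :
    ‖x - y‖ ^ q.toReal ≤ ‖mazur hq0 hqt x - mazur hq0 hqt y‖ := by
  have hr : 1 ≤ q.toReal := by
    simpa using ENNReal.toReal_mono hqt hq1.out
  rw [L1.norm_eq_integral_norm, norm_rpow_eq_integral hq0 hqt]
  refine integral_mono_ae (memLp_one_iff_integrable.1 (memLp_norm_rpow hq0 hqt _))
    (memLp_one_iff_integrable.1 (Lp.memLp _).norm) ?_
  filter_upwards [coeFn_mazur hq0 hqt x, coeFn_mazur hq0 hqt y, Lp.coeFn_sub x y,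
    Lp.coeFn_sub (mazur hq0 hqt x) (mazur hq0 hqt y), (Lp.coeFn_nonneg x).2 hx,
    (Lp.coeFn_nonneg y).2 hy] with t h1 h2 h3 h4 h5 h6
  simp only [h3, h4, Pi.sub_apply, h1, h2, Real.norm_eq_abs]
  simp only [Pi.zero_apply] at h5 h6
  rw [abs_of_nonneg h5, abs_of_nonneg h6]
  exact abs_sub_rpow_le h5 h6 hr

/-- The power mean of order `r` of `|a|` and `|b|`. -/
noncomputable def powMean (r a b : ℝ) : ℝ := ((‖a‖ ^ r + ‖b‖ ^ r) / 2) ^ (1 / r)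

theorem powMean_nonneg (r a b : ℝ) : 0 ≤ powMean r a b := by unfold powMean; positivity

theorem powMean_rpow {r : ℝ} (hr : 0 < r) (a b : ℝ) :
    powMean r a b ^ r = (‖a‖ ^ r + ‖b‖ ^ r) / 2 := by
  rw [powMean, ← Real.rpow_mul (by positivity), one_div_mul_cancel hr.ne', Real.rpow_one]

/-- The power mean is a multiple of the `ℓ_r` norm on `ℝ²`, hence Lipschitz. -/
theorem abs_powMean_sub_le {r : ℝ} (hr : 1 ≤ r) (a b c d : ℝ) :
    |powMean r a b - powMean r c d| ≤ |a - c| + |b - d| := by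
  have hr0 : 0 < r := by linarith
  have hrE : (ENNReal.ofReal r).toReal = r := ENNReal.toReal_ofReal hr0.le
  have : Fact (1 ≤ ENNReal.ofReal r) := ⟨by simpa using hr⟩
  have hn : ∀ u v : ℝ, ‖WithLp.toLp (ENNReal.ofReal r) (u, v)‖ = (‖u‖ ^ r + ‖v‖ ^ r) ^ (1 / r) := by
    intro u v
    rw [WithLp.prod_norm_eq_add (by rw [hrE]; exact hr0), hrE]; rfl
  have hm : ∀ u v : ℝ, powMean r u v
      = (1 / 2) ^ (1 / r) * ‖WithLp.toLp (ENNReal.ofReal r) (u, v)‖ := by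
    intro u v
    rw [hn, powMean, div_eq_mul_one_div, mul_comm, Real.mul_rpow (by norm_num) (by positivity)]
  have hc : ((1 : ℝ) / 2) ^ (1 / r) ≤ 1 :=
    Real.rpow_le_one (by norm_num) (by norm_num) (by positivity)
  rw [hm, hm, ← mul_sub, abs_mul, abs_of_nonneg (by positivity)]
  refine (mul_le_of_le_one_left (abs_nonneg _) hc).trans ((abs_norm_sub_norm_le _ _).trans ?_)
  rw [← WithLp.toLp_sub, Prod.mk_sub_mk, hn]
  refine (Real.rpow_add_rpow_le_add (norm_nonneg _) (norm_nonneg _) hr).trans_eq ?_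
  simp only [Real.norm_eq_abs]

theorem aestronglyMeasurable_powMean (r : ℝ) {f g : ℝ → ℝ}
    (hf : AEStronglyMeasurable f muI) (hg : AEStronglyMeasurable g muI) :
    AEStronglyMeasurable (fun t => powMean r (f t) (g t)) muI := by
  exact ((((hf.aemeasurable.norm.pow_const r).add (hg.aemeasurable.norm.pow_const r)).div_const
    2).pow_const (1 / r)).aestronglyMeasurable

section S
variable [hq1 : Fact (1 ≤ q)]

theorem one_le_toReal (hqt : q ≠ ⊤) : 1 ≤ q.toReal := by
  simpa using ENNReal.toReal_mono hqt hq1.out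

theorem memLp_powMean (hqt : q ≠ ⊤) (x y : Lp ℝ q muI) :
    MemLp (fun t => powMean q.toReal (x t) (y t)) q muI := by
  have hr := one_le_toReal hqt
  have hm : AEStronglyMeasurable (fun t => powMean q.toReal (x t) (y t)) muI :=
    aestronglyMeasurable_powMean _ (Lp.aestronglyMeasurable x) (Lp.aestronglyMeasurable y)
  have hg : MemLp (fun t => ‖x t‖ + ‖y t‖) q muI := (Lp.memLp x).norm.add (Lp.memLp y).norm
  have h0 : powMean q.toReal 0 0 = 0 := by
    have : q.toReal ≠ 0 := by linarith
    simp [powMean, this]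
  refine MemLp.mono' hg hm (ae_of_all _ fun t => ?_)
  have h := abs_powMean_sub_le hr (x t) (y t) 0 0
  rw [h0, sub_zero, sub_zero, sub_zero] at h
  exact h

/-- The power mean of `x` and of its dilation. On densities `|x| ^ q` this is one step of the lazy
random walk which stays at `t` or jumps to `t / 2` with equal probabilities. -/
noncomputable def spread (hqt : q ≠ ⊤) (x : Lp ℝ q muI) : Lp ℝ q muI :=
  (memLp_powMean hqt x (dil q hqt x)).toLp

theorem coeFn_spread (hqt : q ≠ ⊤) (x : Lp ℝ q muI) :
    spread hqt x =ᵐ[muI] fun t => powMean q.toReal (x t) (dil q hqt x t) :=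
  MemLp.coeFn_toLp (memLp_powMean hqt x (dil q hqt x))

theorem spread_nonneg (hqt : q ≠ ⊤) (x : Lp ℝ q muI) : 0 ≤ spread hqt x := by
  rw [← Lp.coeFn_nonneg]
  filter_upwards [coeFn_spread hqt x] with t ht
  rw [ht]; exact powMean_nonneg _ _ _

theorem norm_spread (hqt : q ≠ ⊤) (x : Lp ℝ q muI) : ‖spread hqt x‖ = ‖x‖ := by
  have hr := one_le_toReal hqt
  have hr0 : 0 < q.toReal := by linarith
  have hq0 : q ≠ 0 := (one_pos.trans_le hq1.out).ne'
  rw [← Real.rpow_left_inj (norm_nonneg _) (norm_nonneg _) hr0.ne', norm_rpow_eq_integral hq0 hqt]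
  have e : ∀ᵐ t ∂muI, ‖spread hqt x t‖ ^ q.toReal
      = (‖x t‖ ^ q.toReal + ‖dil q hqt x t‖ ^ q.toReal) / 2 := by
    filter_upwards [coeFn_spread hqt x] with t ht
    rw [ht, Real.norm_of_nonneg (powMean_nonneg _ _ _), powMean_rpow hr0]
  rw [integral_congr_ae e, integral_div,
    integral_add (memLp_one_iff_integrable.1 (memLp_norm_rpow hq0 hqt _))
      (memLp_one_iff_integrable.1 (memLp_norm_rpow hq0 hqt _)),
    ← norm_rpow_eq_integral hq0 hqt, ← norm_rpow_eq_integral hq0 hqt, LinearIsometry.norm_map]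
  ring

theorem norm_spread_sub_le (hqt : q ≠ ⊤) (x y : Lp ℝ q muI) :
    ‖spread hqt x - spread hqt y‖ ≤ 2 * ‖x - y‖ := by
  have hr := one_le_toReal hqt
  have h : ‖spread hqt x - spread hqt y‖ ≤ ‖|x - y| + |dil q hqt x - dil q hqt y|‖ := by
    refine Lp.norm_le_norm_of_ae_le ?_
    filter_upwards [coeFn_spread hqt x, coeFn_spread hqt y, Lp.coeFn_sub x y,
      Lp.coeFn_sub (dil q hqt x) (dil q hqt y), Lp.coeFn_sub (spread hqt x) (spread hqt y),
      Lp.coeFn_abs (x - y), Lp.coeFn_abs (dil q hqt x - dil q hqt y),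
      Lp.coeFn_add |x - y| |dil q hqt x - dil q hqt y|] with t h1 h2 h3 h4 h5 h6 h7 h8
    rw [h5, h8, Pi.sub_apply, Pi.add_apply, h6, h7, h3, h4, h1, h2]
    rw [Real.norm_eq_abs, Real.norm_of_nonneg (by positivity)]
    exact abs_powMean_sub_le hr _ _ _ _
  refine h.trans ((norm_add_le _ _).trans ?_)
  rw [norm_abs_eq_norm, norm_abs_eq_norm, ← map_sub, LinearIsometry.norm_map]
  linarith

/-- The Mazur map turns `spread` into the linear operator `(1 + P) / 2` on `L_1`, where `P` is the
dilation isometry. -/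
theorem mazur_spread (hq0 : q ≠ 0) (hqt : q ≠ ⊤) (x : Lp ℝ q muI) :
    mazur hq0 hqt (spread hqt x) =
      (1 / 2 : ℝ) • (mazur hq0 hqt x + dil 1 ENNReal.one_ne_top (mazur hq0 hqt x)) := by
  have hr0 : 0 < q.toReal := ENNReal.toReal_pos hq0 hqt
  set P := dil 1 ENNReal.one_ne_top with hP
  ext1
  filter_upwards [coeFn_mazur hq0 hqt (spread hqt x), coeFn_spread hqt x, coeFn_mazur hq0 hqt x,
    coeFn_dil hqt x, coeFn_dil ENNReal.one_ne_top (mazur hq0 hqt x),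
    ae_comp_two_mul (coeFn_mazur hq0 hqt x),
    Lp.coeFn_smul (1 / 2 : ℝ) (mazur hq0 hqt x + P (mazur hq0 hqt x)),
    Lp.coeFn_add (mazur hq0 hqt x) (P (mazur hq0 hqt x))] with t h1 h2 h3 h4 h5 h6 h7 h8
  rw [h1, h2, Real.norm_of_nonneg (powMean_nonneg _ _ _), powMean_rpow hr0, h7, Pi.smul_apply, h8,
    Pi.add_apply, h3, h5, h4]
  by_cases ht : t ∈ Set.Iic (1 / 2 : ℝ)
  · simp only [dilFun, indicator_of_mem ht, h6 ht, norm_mul]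
    rw [Real.mul_rpow (norm_nonneg _) (norm_nonneg _),
      Real.norm_of_nonneg (r := (2 : ℝ) ^ (1 / q.toReal)) (by positivity), ← Real.rpow_mul (by norm_num), one_div_mul_cancel hr0.ne']
    simp; ring
  · simp only [dilFun, indicator_of_notMem ht]
    simp [hr0.ne']; ring

/-- An integrable function invariant under the dilation vanishes outside `[0, 2⁻ⁿ]` for every `n`. -/
theorem eq_zero_of_dil_eq {f : Lp ℝ 1 muI} (hf : dil 1 ENNReal.one_ne_top f = f) : f = 0 := by
  have h0 := coeFn_dil ENNReal.one_ne_top f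
  rw [hf] at h0
  have key : ∀ n : ℕ, ∀ᵐ t ∂muI, (1 / 2 : ℝ) ^ n < t → f t = 0 := by
    intro n
    induction n with
    | zero =>
      filter_upwards [ae_restrict_mem measurableSet_Icc] with t ht h
      rw [pow_zero] at h; exact absurd ht.2 (not_le.2 h)
    | succ n ih =>
      filter_upwards [h0, ae_comp_two_mul ih] with t h1 h2 h3
      rw [h1]
      by_cases ht : t ∈ Set.Iic (1 / 2 : ℝ)
      · rw [dilFun, indicator_of_mem ht, h2 ht (by rw [pow_succ] at h3; linarith), mul_zero]
      · rw [dilFun, indicator_of_notMem ht]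
  have hpos : ∀ᵐ t ∂muI, 0 < t := by
    have h1 : ∀ᵐ t ∂muI, t ≠ 0 := Measure.ae_ne _ _
    filter_upwards [ae_restrict_mem measurableSet_Icc, h1] with t ht h
    exact lt_of_le_of_ne ht.1 h.symm
  rw [Lp.eq_zero_iff_ae_eq_zero]
  filter_upwards [ae_all_iff.2 key, hpos] with t h1 h2
  obtain ⟨n, hn⟩ := exists_pow_lt_of_lt_one h2 (by norm_num : (1 / 2 : ℝ) < 1)
  exact h1 n hn

theorem eq_zero_of_spread_eq (hqt : q ≠ ⊤) {x : Lp ℝ q muI} (hx : spread hqt x = x) : x = 0 := by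
  have hq0 : q ≠ 0 := (one_pos.trans_le hq1.out).ne'
  have h := mazur_spread hq0 hqt x
  rw [hx] at h
  set P := dil 1 ENNReal.one_ne_top
  have h1 : P (mazur hq0 hqt x) = mazur hq0 hqt x := by
    have h2 : (2 : ℝ) • mazur hq0 hqt x = mazur hq0 hqt x + P (mazur hq0 hqt x) := by
      conv_lhs => rw [h]
      rw [smul_smul]; norm_num
    rw [two_smul] at h2
    exact (add_left_cancel h2).symm
  have h3 := norm_mazur hq0 hqt x
  rw [eq_zero_of_dil_eq h1, norm_zero, eq_comm, Real.rpow_eq_zero (norm_nonneg _)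
    (ENNReal.toReal_pos hq0 hqt).ne'] at h3
  exact norm_eq_zero.1 h3

theorem norm_iterate_spread_sub_le (hqt : q ≠ ⊤) {z : Lp ℝ q muI} (hz : 0 ≤ z) (hz1 : ‖z‖ = 1)
    (n : ℕ) :
    ‖(spread hqt)^[n + 1] z - (spread hqt)^[n] z‖ ^ q.toReal ≤ 1 / √((n + 1 : ℕ) : ℝ) := by
  have hq0 : q ≠ 0 := (one_pos.trans_le hq1.out).ne'
  set P : Lp ℝ 1 muI →L[ℝ] Lp ℝ 1 muI := (dil 1 ENNReal.one_ne_top).toContinuousLinearMap with hP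
  set Q : Lp ℝ 1 muI →L[ℝ] Lp ℝ 1 muI := (1 / 2 : ℝ) • (1 + P) with hQ
  have hM : ∀ n : ℕ, mazur hq0 hqt ((spread hqt)^[n] z) = (Q ^ n) (mazur hq0 hqt z) := by
    intro n
    induction n with
    | zero => simp
    | succ n ih =>
      rw [Function.iterate_succ_apply', mazur_spread, ih, pow_succ']
      simp [hQ, hP]
  have hnn : ∀ n : ℕ, 0 ≤ (spread hqt)^[n] z := by
    rintro (_ | n)
    · exact hz
    · rw [Function.iterate_succ_apply']; exact spread_nonneg hqt _
  have hPk : ∀ k, ‖P ^ k‖ ≤ 1 := by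
    intro k
    induction k with
    | zero => rw [pow_zero]; exact ContinuousLinearMap.norm_id_le
    | succ k ih =>
      rw [pow_succ]
      exact (norm_mul_le _ _).trans (mul_le_one₀ ih (norm_nonneg _)
        (LinearIsometry.norm_toContinuousLinearMap_le _))
  refine (norm_sub_rpow_le hq0 hqt (hnn _) (hnn _)).trans ?_
  have e : Q ^ (n + 1) - Q ^ n = (1 / 2 : ℝ) • (Q ^ n * (P - 1)) := by
    have : Q - 1 = (1 / 2 : ℝ) • (P - 1) := by rw [hQ]; module
    rw [← mul_smul_comm, ← this, pow_succ, mul_sub, mul_one]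
  rw [hM, hM, ← sub_apply, e]
  refine (ContinuousLinearMap.le_opNorm _ _).trans ?_
  rw [norm_mazur, hz1, Real.one_rpow, mul_one, norm_smul]
  have h := norm_lazy_le P hPk n
  rw [← hQ] at h
  rw [Real.norm_of_nonneg (by norm_num)]
  calc _ ≤ 1 / 2 * (2 / √((n + 1 : ℕ) : ℝ)) := by gcongr
    _ = _ := by ring

end S

/-! ### The retraction onto the positive sphere, and the two maps -/

theorem Lp_smul_nonneg {c : ℝ} (hc : 0 ≤ c) {x : Lp ℝ q muI} (hx : 0 ≤ x) : 0 ≤ c • x := by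
  rw [← Lp.coeFn_nonneg] at hx ⊢
  filter_upwards [hx, Lp.coeFn_smul c x] with t h1 h2
  rw [h2, Pi.smul_apply, smul_eq_mul]
  exact mul_nonneg hc h1

/-- The constant function `1`, a positive unit vector of `L_q([0, 1])`. -/
noncomputable def unitLp (q : ℝ≥0∞) : Lp ℝ q muI := Lp.const q muI 1

theorem unitLp_nonneg : 0 ≤ unitLp q := by
  rw [← Lp.coeFn_nonneg]
  filter_upwards [Lp.coeFn_const q muI (1 : ℝ)] with t ht
  rw [unitLp, ht]; exact zero_le_one

section Retraction
variable [hq1 : Fact (1 ≤ q)]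

theorem norm_unitLp : ‖unitLp q‖ = 1 := by
  have hne : NeZero muI := ⟨fun h => by
    have := congrArg (fun m : Measure ℝ => m univ) h
    simp at this⟩
  rw [unitLp, Lp.norm_const _ _ _ (one_pos.trans_le hq1.out).ne']
  simp [Measure.real]

/-- The positive vector `|x| + (1 - ‖x‖)⁺ · 1`, whose norm is bounded away from zero. -/
noncomputable def preRetract (x : Lp ℝ q muI) : Lp ℝ q muI :=
  |x| + max (1 - ‖x‖) 0 • unitLp q

theorem preRetract_nonneg (x : Lp ℝ q muI) : 0 ≤ preRetract x :=
  add_nonneg (abs_nonneg x) (Lp_smul_nonneg (le_max_right _ _) unitLp_nonneg)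

theorem half_le_norm_preRetract (x : Lp ℝ q muI) : 1 / 2 ≤ ‖preRetract x‖ := by
  have hs := Lp_smul_nonneg (le_max_right (1 - ‖x‖) 0) (unitLp_nonneg (q := q))
  have h1 : ‖x‖ ≤ ‖preRetract x‖ := by
    refine norm_le_norm_of_abs_le_abs ?_
    rw [abs_of_nonneg (preRetract_nonneg x)]
    exact le_add_of_nonneg_right hs
  have h2 : 1 - ‖x‖ ≤ ‖preRetract x‖ := by
    have : ‖max (1 - ‖x‖) 0 • unitLp q‖ ≤ ‖preRetract x‖ := by
      refine norm_le_norm_of_abs_le_abs ?_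
      rw [abs_of_nonneg (preRetract_nonneg x), abs_of_nonneg hs]
      exact le_add_of_nonneg_left (abs_nonneg x)
    rw [norm_smul, norm_unitLp, mul_one, Real.norm_of_nonneg (le_max_right _ _)] at this
    exact (le_max_left _ _).trans this
  linarith

theorem norm_preRetract_sub_le (x y : Lp ℝ q muI) :
    ‖preRetract x - preRetract y‖ ≤ 2 * ‖x - y‖ := by
  have e : preRetract x - preRetract y
      = (|x| - |y|) + (max (1 - ‖x‖) 0 - max (1 - ‖y‖) 0) • unitLp q := by
    unfold preRetract; module
  have h1 : |max (1 - ‖x‖) 0 - max (1 - ‖y‖) 0| ≤ ‖x - y‖ := by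
    refine (abs_max_sub_max_le_abs _ _ _).trans ?_
    rw [sub_sub_sub_cancel_left, norm_sub_rev]
    exact abs_norm_sub_norm_le y x
  rw [e]
  refine (norm_add_le _ _).trans ?_
  rw [norm_smul, norm_unitLp, mul_one, Real.norm_eq_abs]
  have := norm_abs_sub_abs x y
  linarith

/-- A Lipschitz retraction of `L_q` onto the positive part of its unit sphere. -/
noncomputable def retract (x : Lp ℝ q muI) : Lp ℝ q muI :=
  ‖preRetract x‖⁻¹ • preRetract x

theorem norm_retract (x : Lp ℝ q muI) : ‖retract x‖ = 1 := by
  have := half_le_norm_preRetract x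
  have h : ‖preRetract x‖ ≠ 0 := by linarith
  simp [retract, norm_smul, h]

theorem retract_eq_self {x : Lp ℝ q muI} (hx : 0 ≤ x) (hx1 : ‖x‖ = 1) : retract x = x := by
  have : preRetract x = x := by simp [preRetract, hx1, abs_of_nonneg hx]
  rw [retract, this, hx1, inv_one, one_smul]

theorem norm_retract_sub_le (x y : Lp ℝ q muI) : ‖retract x - retract y‖ ≤ 8 * ‖x - y‖ := by
  have h1 := norm_normalize_sub_le (half_le_norm_preRetract x) (half_le_norm_preRetract y)
  have h2 := norm_preRetract_sub_le x y
  unfold retract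
  linarith

/-- The composition of the retraction onto the positive part of the sphere with `spread`. -/
theorem exists_asymptotically_regular (hqt : q ≠ ⊤) :
    ∃ T : Lp ℝ q muI → Lp ℝ q muI, (∀ x, ‖T x‖ = 1) ∧ (∀ x, T x ≠ x) ∧
      (∀ x y, ‖T x - T y‖ ≤ 16 * ‖x - y‖) ∧
      ∀ ε : ℝ, 0 < ε → ∃ N : ℕ, ∀ n : ℕ, N ≤ n → ∀ y, ‖T^[n + 1] y - T^[n] y‖ < ε := by
  have hr0 : 0 < q.toReal := by linarith [one_le_toReal hqt]
  have hn : ∀ x : Lp ℝ q muI, ‖spread hqt (retract x)‖ = 1 := fun x => by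
    rw [norm_spread, norm_retract]
  refine ⟨fun x => spread hqt (retract x), hn, fun x hx => ?_, fun x y => ?_, fun ε hε => ?_⟩
  · have h0 : 0 ≤ x := by rw [← hx]; exact spread_nonneg hqt _
    have h1 : ‖x‖ = 1 := by rw [← hx]; exact hn x
    simp only [retract_eq_self h0 h1] at hx
    rw [eq_zero_of_spread_eq hqt hx, norm_zero] at h1
    exact zero_ne_one h1
  · have h1 := norm_spread_sub_le hqt (retract x) (retract y)
    have h2 := norm_retract_sub_le x y
    simp only
    linarith
  -- after one step the orbit lies in the positive part of the sphere, where `retract` is trivial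
  · have hit : ∀ (y : Lp ℝ q muI) (n : ℕ), (fun x => spread hqt (retract x))^[n + 1] y
        = (spread hqt)^[n] (spread hqt (retract y)) := by
      intro y n
      induction n with
      | zero => rfl
      | succ n ih =>
        have hpos : 0 ≤ (fun x => spread hqt (retract x))^[n + 1] y := by
          rw [Function.iterate_succ_apply']; exact spread_nonneg hqt _
        have hone : ‖(fun x => spread hqt (retract x))^[n + 1] y‖ = 1 := by
          rw [Function.iterate_succ_apply']; exact hn _
        rw [Function.iterate_succ_apply', retract_eq_self hpos hone, ih,
          Function.iterate_succ_apply' (spread hqt) n]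
    have ht : Tendsto (fun n : ℕ => 1 / √((n + 1 : ℕ) : ℝ)) atTop (𝓝 0) := by
      simp only [one_div]
      exact tendsto_inv_atTop_zero.comp (Real.tendsto_sqrt_atTop.comp
        (tendsto_natCast_atTop_atTop.comp (tendsto_add_atTop_nat 1)))
    obtain ⟨N, hN⟩ := eventually_atTop.1
      (ht.eventually_lt_const (Real.rpow_pos_of_pos hε q.toReal))
    refine ⟨N + 1, fun n hNn y => ?_⟩
    obtain ⟨m, rfl⟩ : ∃ m, n = m + 1 := ⟨n - 1, by omega⟩
    rw [hit, hit]
    have h := (norm_iterate_spread_sub_le hqt (spread_nonneg hqt (retract y)) (hn y) m).trans_lt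
      (hN m (by omega))
    exact (Real.rpow_lt_rpow_iff (norm_nonneg _) hε.le hr0).1 h

end Retraction

/-- Interpolation between a Lipschitz bound and a uniform bound gives a Hölder bound, with a small
constant if the uniform bound is small. -/
theorem holder_of_lipschitz_of_bounded {d D r L α lam : ℝ} (hα : α ∈ Set.Ioo (0 : ℝ) 1)
    (hd : 0 ≤ d) (hD : 0 ≤ D) (hL : 0 ≤ L) (h1 : D ≤ L * d) (h2 : D ≤ r)
    (hlam : L ^ α * r ^ (1 - α) ≤ lam) : D ≤ lam * d ^ α := by
  have hα0 := hα.1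
  have hα1 := sub_pos.2 hα.2
  calc D = D ^ α * D ^ (1 - α) := by
        rw [← Real.rpow_add_of_nonneg hD hα0.le hα1.le]; simp
    _ ≤ (L * d) ^ α * r ^ (1 - α) := by gcongr
    _ = L ^ α * r ^ (1 - α) * d ^ α := by rw [Real.mul_rpow hL hd]; ring
    _ ≤ lam * d ^ α := by gcongr

/-- The rescaled map `x ↦ r T (x / r)` with `r` small has the same Lipschitz constant as `T` but
values of norm `r`. -/
theorem exists_holder {X : Type*} [NormedAddCommGroup X] [NormedSpace ℝ X] {T : X → X} {L : ℝ}
    (hL : 0 ≤ L) (hT1 : ∀ x, ‖T x‖ = 1) (hfix : ∀ x, T x ≠ x)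
    (hLip : ∀ x y, ‖T x - T y‖ ≤ L * ‖x - y‖)
    (hreg : ∀ ε : ℝ, 0 < ε → ∃ N : ℕ, ∀ n : ℕ, N ≤ n → ∀ y, ‖T^[n + 1] y - T^[n] y‖ < ε)
    {α lam : ℝ} (hα : α ∈ Set.Ioo (0 : ℝ) 1) (hlam : 0 < lam) :
    ∃ S : X → X, Set.MapsTo S (closedBall 0 1) (closedBall 0 1) ∧
      (∀ y ∈ closedBall (0 : X) 1, S y ≠ y) ∧
      (∀ y ∈ closedBall (0 : X) 1, ∀ z ∈ closedBall (0 : X) 1,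
        ‖S y - S z‖ ≤ lam * ‖y - z‖ ^ α) ∧
      sInf ((fun y => ‖y - S y‖) '' closedBall (0 : X) 1) = 0 := by
  have hα1 := sub_pos.2 hα.2
  -- a radius `r ≤ 1` so small that `L ^ α * (2 * r) ^ (1 - α) ≤ lam`
  obtain ⟨r, hr0, hr1, hr⟩ : ∃ r : ℝ, 0 < r ∧ r ≤ 1 ∧ L ^ α * (2 * r) ^ (1 - α) ≤ lam := by
    have hc : Tendsto (fun r : ℝ => L ^ α * (2 * r) ^ (1 - α)) (𝓝[>] 0) (𝓝 0) := by
      have : ContinuousAt (fun r : ℝ => L ^ α * (2 * r) ^ (1 - α)) 0 := by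
        refine continuousAt_const.mul (ContinuousAt.rpow_const (by fun_prop) (Or.inr hα1.le))
      have h := this.tendsto
      simp only [mul_zero, Real.zero_rpow hα1.ne'] at h
      exact h.mono_left nhdsWithin_le_nhds
    have h1 : ∀ᶠ r : ℝ in 𝓝[>] 0, r ≤ 1 :=
      nhdsWithin_le_nhds (Iic_mem_nhds one_pos)
    obtain ⟨r, ⟨h2, h3⟩, h4⟩ :=
      ((hc.eventually_le_const hlam).and h1 |>.and self_mem_nhdsWithin).exists
    exact ⟨r, h4, h3, h2⟩
  have hnS : ∀ x, ‖r • T (r⁻¹ • x)‖ = r := fun x => by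
    rw [norm_smul, hT1, mul_one, Real.norm_of_nonneg hr0.le]
  refine ⟨fun x => r • T (r⁻¹ • x), fun x _ => ?_, fun y _ hy => ?_, fun y _ z _ => ?_, ?_⟩
  · rw [mem_closedBall_zero_iff, hnS]; exact hr1
  · apply hfix (r⁻¹ • y)
    rw [eq_inv_smul_iff₀ hr0.ne']; exact hy
  · refine holder_of_lipschitz_of_bounded hα (norm_nonneg _) (norm_nonneg _)
      hL ?_ ?_ hr
    · rw [← smul_sub, norm_smul, Real.norm_of_nonneg hr0.le]
      have h := hLip (r⁻¹ • y) (r⁻¹ • z)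
      rw [← smul_sub, norm_smul, Real.norm_of_nonneg (inv_pos.2 hr0).le] at h
      calc r * ‖T (r⁻¹ • y) - T (r⁻¹ • z)‖ ≤ r * (L * (r⁻¹ * ‖y - z‖)) := by gcongr
        _ = L * ‖y - z‖ := by field_simp
    · refine (norm_sub_le _ _).trans ?_
      rw [hnS, hnS]; linarith
  · refine le_antisymm (le_of_forall_pos_le_add fun ε hε => ?_) (Real.sInf_nonneg ?_)
    -- the rescaled orbit `r • T^[n] 0` consists of approximate fixed points
    · obtain ⟨N, hN⟩ := hreg ε hε
      have h := hN (N + 1) (by omega) 0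
      refine (csInf_le (show BddBelow _ from ⟨0, ?_⟩)
        (Set.mem_image_of_mem _ (?_ : r • T^[N + 1] 0 ∈ closedBall (0 : X) 1))).trans ?_
      · rintro _ ⟨y, _, rfl⟩; exact norm_nonneg _
      · rw [mem_closedBall_zero_iff, norm_smul, Function.iterate_succ_apply', hT1, mul_one,
          Real.norm_of_nonneg hr0.le]
        exact hr1
      · simp only
        rw [inv_smul_smul₀ hr0.ne', ← smul_sub, norm_smul, Real.norm_of_nonneg hr0.le, norm_sub_rev,
          ← Function.iterate_succ_apply' T, zero_add]
        exact (mul_le_of_le_one_left (norm_nonneg _) hr1).trans h.le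
    · rintro _ ⟨y, _, rfl⟩; exact norm_nonneg _

/-- Let `1 < p < ∞` and let `L_p` be the Lebesgue space `L_p([0,1])` of
real functions with Lebesgue measure.  Then (i) there is a fixed-point-free map
`T : B_{L_p} → B_{L_p}` that is Lipschitz and uniformly asymptotically regular, and (ii) for
every `α ∈ (0,1)` and `λ > 0` there is a fixed-point-free `α`-Hölder `λ`-Lipschitz map
`T : B_{L_p} → B_{L_p}` with `d(T, B_{L_p}) = 0`. -/
theorem statement17 (p : ℝ≥0∞) [Fact (1 ≤ p)] (hp1 : 1 < p) (hptop : p ≠ ⊤) :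
    (∃ T : Lp ℝ p ((volume : Measure ℝ).restrict (Set.Icc (0 : ℝ) 1)) →
          Lp ℝ p ((volume : Measure ℝ).restrict (Set.Icc (0 : ℝ) 1)),
      Set.MapsTo T (Metric.closedBall 0 1) (Metric.closedBall 0 1) ∧
      (∀ y ∈ Metric.closedBall (0 : Lp ℝ p ((volume : Measure ℝ).restrict (Set.Icc (0 : ℝ) 1))) 1,
        T y ≠ y) ∧
      (∃ L : ℝ, 0 ≤ L ∧ ∀ y ∈ Metric.closedBall
          (0 : Lp ℝ p ((volume : Measure ℝ).restrict (Set.Icc (0 : ℝ) 1))) 1,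
        ∀ z ∈ Metric.closedBall
          (0 : Lp ℝ p ((volume : Measure ℝ).restrict (Set.Icc (0 : ℝ) 1))) 1,
          ‖T y - T z‖ ≤ L * ‖y - z‖) ∧
      (∀ ε : ℝ, 0 < ε → ∃ N : ℕ, ∀ n : ℕ, N ≤ n →
        ∀ y ∈ Metric.closedBall
          (0 : Lp ℝ p ((volume : Measure ℝ).restrict (Set.Icc (0 : ℝ) 1))) 1,
          ‖T^[n + 1] y - T^[n] y‖ < ε)) ∧
    (∀ α : ℝ, α ∈ Set.Ioo (0 : ℝ) 1 → ∀ lam : ℝ, 0 < lam →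
      ∃ T : Lp ℝ p ((volume : Measure ℝ).restrict (Set.Icc (0 : ℝ) 1)) →
            Lp ℝ p ((volume : Measure ℝ).restrict (Set.Icc (0 : ℝ) 1)),
        Set.MapsTo T (Metric.closedBall 0 1) (Metric.closedBall 0 1) ∧
        (∀ y ∈ Metric.closedBall
            (0 : Lp ℝ p ((volume : Measure ℝ).restrict (Set.Icc (0 : ℝ) 1))) 1, T y ≠ y) ∧
        (∀ y ∈ Metric.closedBall
            (0 : Lp ℝ p ((volume : Measure ℝ).restrict (Set.Icc (0 : ℝ) 1))) 1,
          ∀ z ∈ Metric.closedBall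
            (0 : Lp ℝ p ((volume : Measure ℝ).restrict (Set.Icc (0 : ℝ) 1))) 1,
            ‖T y - T z‖ ≤ lam * ‖y - z‖ ^ α) ∧
        sInf ((fun y => ‖y - T y‖) ''
          Metric.closedBall
            (0 : Lp ℝ p ((volume : Measure ℝ).restrict (Set.Icc (0 : ℝ) 1))) 1) = 0) := by
  obtain ⟨T, hT1, hfix, hLip, hreg⟩ := exists_asymptotically_regular (q := p) hptop
  refine ⟨⟨T, fun x _ => ?_, fun y _ => hfix y, ⟨16, by norm_num, fun y _ z _ => hLip y z⟩,
    fun ε hε => ?_⟩, fun α hα lam hlam => exists_holder (by norm_num) hT1 hfix hLip hreg hα hlam⟩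
  · rw [mem_closedBall_zero_iff]; exact (hT1 x).le
  · obtain ⟨N, hN⟩ := hreg ε hε
    exact ⟨N, fun n hn y _ => hN n hn y⟩
end
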